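/- arXiv:2406.13780 — 2 statements merged into one kernel-verified Lean document; each statement's English description precedes it below -/
import Mathlib

section
/- For every integer r ≥ 2 and positive integers s_1,…,s_r with s := s_1+⋯+s_r, and for every sufficiently large prime q, there exists a graph G containing no subgraph isomorphic to K_{r+2}, with at least (1/2)·q^{4−1/(s−1)} vertices, such that α_{K_{s_1,…,s_r}}(G) < q^{2−1/(s−1)}·(log₂ q)^3. -/
/-!
The vertices of `G` are lines of a Hermitian unital, chosen at random, and two lines are joined when
they meet in a point at which a random colouring gives them different colours.

**The unital.** Over the field `K` of order `q ^ 2` with conjugation `x ↦ x ^ q`, the points are the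
affine points of `x * conj x = y + conj y` and the lines are the nontangent lines `y = a * x + b`.
There are at most `q ^ 3` points and between `q ^ 4 - q ^ 3` and `q ^ 4` lines, each line has `q + 1`
points, and two lines share at most one point. The decisive property is that there is no O'Nan
configuration, i.e. four lines meeting pairwise with no three concurrent (`uInc_onanFree`): if three
vectors and one suitable combination of each two of them are isotropic for a Hermitian form, and
these combinations are collinear, then the Gram determinant vanishes (`onan_core`).

**No clique.** Give each flag (point, line) a colour in `Fin r`, and join two lines when they meet in
a point at which their colours differ. By the absence of O'Nan configurations, all but at most one of
the lines of an `(r + 2)`-clique pass through one point `p`, where these `r + 1` lines have distinct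
colours out of `r`; this is absurd (`not_containsCopy_top`).

**Rich points.** A set `T` of lines with at least `sz i` lines of colour `i` at some point, for each
`i`, contains the complete multipartite graph. Hence the independence number in question is less than
`t` as soon as each `t`-set of vertices has such a rich point (`fIndepNum_lt`).

**Containers.** With a random colouring, in every large set `X` of lines most incidences lie at points
where all colours are well represented (`exists_colouring`). So, if `X` has more than `C * q ^ 2`
lines, then the coloured copies of the multipartite graph inside pencils of `X`, suitably weighted,
form a hypergraph with well distributed degrees, where `k + 1` is the sum of the `sz i`. The
container theorem `containers` covers the sets in `X` without rich points by at most `q ^ O(b)` sets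
of size at most `(1 - c) * |X|`, where `b` is about `B = q ^ (2 - 1 / k)` (`container_step`). After
`O(log q)` iterations the containers have size at most `C * q ^ 2`, and there are
`exp (O(B * (log q) ^ 2))` of them.

**Sampling.** Choose `m` lines at random, where `m` is about `q ^ 2 * B / 2`. The expected number of
`t`-sets without rich points is at most
`exp (O(B * (log q) ^ 2)) * (C * q ^ 2).choose t * (2 * B / q ^ 2) ^ t`, which is less than `1` for `t`
about `B * (logb 2 q) ^ 3` (`union_bound`, `parameters`). So some choice contains no such set
(`exists_avoiding`).
-/

/-- `G` contains a copy of `F` as a (not necessarily induced) subgraph, i.e. there is an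
injective graph homomorphism from `F` to `G`. -/
def ContainsCopy {α β : Type*} (F : SimpleGraph α) (G : SimpleGraph β) : Prop :=
  ∃ f : α → β, Function.Injective f ∧ ∀ ⦃a b : α⦄, F.Adj a b → G.Adj (f a) (f b)

/-- The `F`-independence number of a finite graph `G`: the maximum size of a set `S` of
vertices such that the induced subgraph `G[S]` contains no copy of `F`. -/
noncomputable def fIndepNum {α β : Type*} [Fintype β] (F : SimpleGraph α) (G : SimpleGraph β) :
    ℕ :=
  sSup {k | ∃ S : Finset β, S.card = k ∧ ¬ ContainsCopy F (G.induce (S : Set β))}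

/-- `f_{F,H}(n)`: the minimum of the `F`-independence number over all `H`-free graphs on
`n` vertices. -/
noncomputable def minFIndep {α γ : Type*} (F : SimpleGraph α) (H : SimpleGraph γ) (n : ℕ) : ℕ :=
  sInf {k | ∃ G : SimpleGraph (Fin n), ¬ ContainsCopy H G ∧ fIndepNum F G = k}

/-- The Turán number `ex(n, F)`: the maximum number of edges of an `F`-free graph on `n`
vertices. -/
noncomputable def turanNum (n : ℕ) {α : Type*} (F : SimpleGraph α) : ℕ :=
  sSup {k | ∃ G : SimpleGraph (Fin n), ¬ ContainsCopy F G ∧ k = Nat.card G.edgeSet}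

/-! ### Hypergraph containers for weighted hypergraphs -/

/-- The weighted degree of `Y` in the weighted hypergraph `w`: the total weight of the edges
containing `Y`. In particular `wdeg w ∅` is the total weight. -/
noncomputable def wdeg {V : Type*} [Fintype V] [DecidableEq V] (w : Finset V → ℝ)
    (Y : Finset V) : ℝ := ∑ A, if Y ⊆ A then w A else 0

/-- `T` contains no edge of the weighted hypergraph `w`, the edges being the sets of nonzero
weight. -/
def WIndep {V : Type*} (w : Finset V → ℝ) (T : Finset V) : Prop := ∀ A ⊆ T, w A = 0

/-- Every member of `𝓣` lies in one of at most `N` sets, each of size at most `y`. -/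
def Covered {V : Type*} (𝓣 : Set (Finset V)) (N : ℕ) (y : ℝ) : Prop :=
  ∃ 𝒞 : Finset (Finset V), 𝒞.card ≤ N ∧ (∀ C ∈ 𝒞, (C.card : ℝ) ≤ y) ∧ ∀ T ∈ 𝓣, ∃ C ∈ 𝒞, T ⊆ C

/-- `w` is a nonnegative `k`-uniform weighted hypergraph on `X` in which every nonempty set `Y`
has degree at most `D * ρ ^ (|Y| - 1)`. -/
structure Spread {V : Type*} [Fintype V] [DecidableEq V] (X : Finset V) (k : ℕ) (D ρ : ℝ)
    (w : Finset V → ℝ) : Prop where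
  nonneg : ∀ A, 0 ≤ w A
  unif : ∀ A, w A ≠ 0 → A.card = k ∧ A ⊆ X
  deg : ∀ Y : Finset V, Y.Nonempty → wdeg w Y ≤ D * ρ ^ (Y.card - 1)

lemma Covered.mono {V : Type*} {𝓣 𝓣' : Set (Finset V)} {N N' : ℕ} {y y' : ℝ}
    (h : Covered 𝓣 N y) (h1 : 𝓣' ⊆ 𝓣) (h2 : N ≤ N') (h3 : y ≤ y') : Covered 𝓣' N' y' := by
  obtain ⟨𝒞, hc, hy, hT⟩ := h
  exact ⟨𝒞, hc.trans h2, fun C hC => (hy C hC).trans h3, fun T h => hT T (h1 h)⟩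

/-- Splitting off a container `C₀` and branching over the choice of a vertex `v`. -/
lemma covered_step {V : Type*} [Fintype V] [DecidableEq V] {𝓣 : Set (Finset V)}
    {𝓢 : V → Set (Finset V)} {N : ℕ} {y : ℝ} (hN : 1 ≤ N) (C₀ : Finset V)
    (hC₀ : (C₀.card : ℝ) ≤ y) (h𝓢 : ∀ v, Covered (𝓢 v) N y)
    (h : ∀ T ∈ 𝓣, T ⊆ C₀ ∨ ∃ v, T ∈ 𝓢 v) : Covered 𝓣 ((Fintype.card V + 1) * N) y := by
  choose 𝒞 h1 h2 h3 using h𝓢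
  refine ⟨insert C₀ (Finset.univ.biUnion 𝒞), ?_, ?_, ?_⟩
  · calc _ ≤ (Finset.univ.biUnion 𝒞).card + 1 := Finset.card_insert_le _ _
      _ ≤ Fintype.card V * N + 1 := by
          gcongr
          exact Finset.card_biUnion_le_card_mul _ _ _ fun v _ => h1 v
      _ ≤ _ := by nlinarith
  · intro C hC
    simp only [Finset.mem_insert, Finset.mem_biUnion, Finset.mem_univ, true_and] at hC
    rcases hC with rfl | ⟨v, hv⟩
    · exact hC₀
    · exact h2 v C hv
  · intro T hT
    rcases h T hT with h0 | ⟨v, hv⟩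
    · exact ⟨C₀, Finset.mem_insert_self _ _, h0⟩
    · obtain ⟨C, hC, hTC⟩ := h3 v T hv
      exact ⟨C, Finset.mem_insert_of_mem (Finset.mem_biUnion.2 ⟨v, Finset.mem_univ _, hC⟩), hTC⟩

section
variable {V : Type*} [Fintype V] [DecidableEq V]

lemma wdeg_nonneg {w : Finset V → ℝ} (hw : ∀ A, 0 ≤ w A) (Y : Finset V) : 0 ≤ wdeg w Y :=
  Finset.sum_nonneg fun A _ => by split_ifs <;> simp [hw]

lemma wdeg_mono {w w' : Finset V → ℝ} (h : ∀ A, w A ≤ w' A) (Y : Finset V) :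
    wdeg w Y ≤ wdeg w' Y := by
  unfold wdeg
  gcongr with A
  split_ifs <;> simp [h]

lemma wdeg_empty (w : Finset V → ℝ) : wdeg w ∅ = ∑ A, w A := by simp [wdeg]

/-- The sum of the degrees of the vertices of `X` is `k` times the total weight. -/
lemma sum_wdeg_singleton {X : Finset V} {k : ℕ} {w : Finset V → ℝ}
    (hw : ∀ A, w A ≠ 0 → A.card = k ∧ A ⊆ X) : ∑ v ∈ X, wdeg w {v} = k * wdeg w ∅ := by
  rw [wdeg_empty, Finset.mul_sum]
  unfold wdeg
  rw [Finset.sum_comm]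
  refine Finset.sum_congr rfl fun A _ => ?_
  by_cases hA : w A = 0
  · simp [hA]
  · obtain ⟨h1, h2⟩ := hw A hA
    rw [← Finset.sum_filter, Finset.sum_const, nsmul_eq_mul]
    congr 2
    rw [← h1]
    congr 1
    ext v
    simp only [Finset.mem_filter, Finset.singleton_subset_iff]
    exact ⟨fun h => h.2, fun h => ⟨h2 h, h⟩⟩

lemma sum_wdeg {k : ℕ} {w : Finset V → ℝ} (hw : ∀ A, w A ≠ 0 → A.card = k) :
    ∑ Y, wdeg w Y = 2 ^ k * wdeg w ∅ := by
  rw [wdeg_empty, Finset.mul_sum]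
  unfold wdeg
  rw [Finset.sum_comm]
  refine Finset.sum_congr rfl fun A _ => ?_
  by_cases hA : w A = 0
  · simp [hA]
  · rw [← Finset.sum_filter, Finset.sum_const, nsmul_eq_mul]
    congr 1
    have : Finset.univ.filter (· ⊆ A) = A.powerset := by ext; simp
    rw [this, Finset.card_powerset, hw A hA]
    norm_num

/-- The link of the vertex `v`. -/
noncomputable def wlink (w : Finset V → ℝ) (v : V) (A : Finset V) : ℝ :=
  if v ∈ A then 0 else w (insert v A)

lemma wdeg_wlink (w : Finset V → ℝ) (v : V) (Y : Finset V) :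
    wdeg (wlink w v) Y = if v ∈ Y then 0 else wdeg w (insert v Y) := by
  split_ifs with hv
  · refine Finset.sum_eq_zero fun A _ => ?_
    split_ifs with h
    · simp [wlink, h hv]
    · rfl
  · unfold wdeg
    rw [← Finset.sum_filter, ← Finset.sum_filter]
    have : ∑ A ∈ Finset.univ.filter (Y ⊆ ·), wlink w v A =
        ∑ A ∈ Finset.univ.filter (fun A => Y ⊆ A ∧ v ∉ A), w (insert v A) := by
      simp only [wlink]
      rw [← Finset.filter_filter, Finset.sum_filter (fun A => v ∉ A)]
      refine Finset.sum_congr rfl fun A _ => ?_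
      by_cases h : v ∈ A <;> simp [h]
    rw [this]
    refine Finset.sum_bij' (fun A _ => insert v A) (fun A _ => A.erase v) ?_ ?_ ?_ ?_ ?_
    · intro A hA
      simp only [Finset.mem_filter, Finset.mem_univ, true_and] at hA ⊢
      exact Finset.insert_subset_insert _ hA.1
    · intro A hA
      simp only [Finset.mem_filter, Finset.mem_univ, true_and] at hA ⊢
      refine ⟨fun y hy => Finset.mem_erase.2 ⟨?_, hA (Finset.mem_insert_of_mem hy)⟩, by simp⟩
      rintro rfl
      exact hv hy
    · intro A hA
      simp only [Finset.mem_filter, Finset.mem_univ, true_and] at hA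
      exact Finset.erase_insert hA.2
    · intro A hA
      simp only [Finset.mem_filter, Finset.mem_univ, true_and] at hA
      exact Finset.insert_erase (hA (Finset.mem_insert_self _ _))
    · intros; rfl

lemma wdeg_add (w u : Finset V → ℝ) (Y : Finset V) :
    wdeg (fun A => w A + u A) Y = wdeg w Y + wdeg u Y := by
  unfold wdeg
  rw [← Finset.sum_add_distrib]
  refine Finset.sum_congr rfl fun A _ => ?_
  split_ifs <;> simp

/-- `Y` is saturated in `u` when its degree exceeds half of the bound `D * ρ ^ (|Y| - 1)`. -/
def Saturated (u : Finset V → ℝ) (D ρ : ℝ) (Y : Finset V) : Prop :=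
  Y.Nonempty ∧ D * ρ ^ (Y.card - 1) / 2 < wdeg u Y

open Classical in
/-- The weighted hypergraph `w` without the edges containing a set saturated in `u`. -/
noncomputable def trim (w u : Finset V → ℝ) (D ρ : ℝ) (A : Finset V) : ℝ :=
  if ∃ Y ⊆ A, Saturated u D ρ Y then 0 else w A

lemma trim_nonneg {w u : Finset V → ℝ} {D ρ : ℝ} (hw : ∀ A, 0 ≤ w A) (A : Finset V) :
    0 ≤ trim w u D ρ A := by
  unfold trim; split_ifs <;> simp [hw]

lemma trim_le {w u : Finset V → ℝ} {D ρ : ℝ} (hw : ∀ A, 0 ≤ w A) (A : Finset V) :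
    trim w u D ρ A ≤ w A := by
  unfold trim; split_ifs <;> simp [hw]

lemma trim_ne {w u : Finset V → ℝ} {D ρ : ℝ} {A : Finset V} (h : trim w u D ρ A ≠ 0) :
    w A ≠ 0 := by
  unfold trim at h; split_ifs at h <;> simp_all

/-- Trimming loses little: the number of saturated sets, weighted by their degrees in `w`, is
controlled by the total weight of `u`. -/
lemma trim_total {X : Finset V} {k : ℕ} {D D' ρ : ℝ} {w u : Finset V → ℝ} (hD : 0 < D)
    (hD' : 0 < D') (hw : Spread X (k + 1) D ρ w) (hu : Spread X k D' ρ u) :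
    wdeg w ∅ - 2 * D / D' * (2 ^ k * wdeg u ∅) ≤ wdeg (trim w u D' ρ) ∅ := by
  classical
  have key : wdeg w ∅ ≤ wdeg (trim w u D' ρ) ∅ +
      ∑ Y ∈ Finset.univ.filter (Saturated u D' ρ), wdeg w Y := by
    rw [wdeg_empty, wdeg_empty]
    unfold wdeg
    rw [Finset.sum_comm, ← Finset.sum_add_distrib]
    refine Finset.sum_le_sum fun A _ => ?_
    unfold trim
    have hnn : ∀ Y ∈ Finset.univ.filter (Saturated u D' ρ), 0 ≤ if Y ⊆ A then w A else 0 := by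
      intro Y _
      split_ifs <;> simp [hw.nonneg]
    split_ifs with h
    · obtain ⟨Y, hYA, hY⟩ := h
      have := Finset.single_le_sum hnn (Finset.mem_filter.2 ⟨Finset.mem_univ Y, hY⟩)
      simpa [hYA] using this
    · have := Finset.sum_nonneg hnn
      linarith
  have h2 : ∑ Y ∈ Finset.univ.filter (Saturated u D' ρ), wdeg w Y ≤
      2 * D / D' * (2 ^ k * wdeg u ∅) := by
    rw [← sum_wdeg fun A h => (hu.unif A h).1, Finset.mul_sum]
    calc _ ≤ ∑ Y ∈ Finset.univ.filter (Saturated u D' ρ), 2 * D / D' * wdeg u Y := by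
          refine Finset.sum_le_sum fun Y hY => ?_
          obtain ⟨hY1, hY2⟩ := (Finset.mem_filter.1 hY).2
          refine (hw.deg Y hY1).trans ?_
          calc D * ρ ^ (Y.card - 1) = 2 * D / D' * (D' * ρ ^ (Y.card - 1) / 2) := by
                field_simp
            _ ≤ _ := by gcongr
      _ ≤ _ := by
          refine Finset.sum_le_sum_of_subset_of_nonneg (Finset.subset_univ _) fun Y _ _ => ?_
          have := wdeg_nonneg hu.nonneg Y
          positivity
  linarith

/-- Adding the link of a vertex in the trimmed hypergraph keeps the degrees under control. -/
lemma spread_step {X : Finset V} {k : ℕ} {D D' ρ : ℝ} {w u : Finset V → ℝ} (hρ : 0 < ρ)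
    (hDD' : 2 * (ρ * D) ≤ D') (hw : Spread X (k + 1) D ρ w) (hu : Spread X k D' ρ u) (v : V) :
    Spread X k D' ρ (fun A => u A + wlink (trim w u D' ρ) v A) := by
  refine ⟨fun A => ?_, fun A hA => ?_, fun Y hY => ?_⟩
  · refine add_nonneg (hu.nonneg A) ?_
    unfold wlink
    split_ifs
    · rfl
    · exact trim_nonneg hw.nonneg _
  · by_cases h : u A = 0
    · rw [h, zero_add] at hA
      unfold wlink at hA
      split_ifs at hA with hv
      · simp at hA
      · obtain ⟨h1, h2⟩ := hw.unif _ (trim_ne hA)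
        rw [Finset.card_insert_of_notMem hv] at h1
        exact ⟨by omega, (Finset.subset_insert _ _).trans h2⟩
    · exact hu.unif A h
  · rw [wdeg_add, wdeg_wlink]
    split_ifs with hv
    · simpa using hu.deg Y hY
    by_cases hs : Saturated u D' ρ Y
    · have : wdeg (trim w u D' ρ) (insert v Y) = 0 := by
        refine Finset.sum_eq_zero fun A _ => ?_
        split_ifs with h
        · unfold trim
          rw [if_pos ⟨Y, (Finset.subset_insert _ _).trans h, hs⟩]
        · rfl
      rw [this, add_zero]
      exact hu.deg Y hY
    · have h1 : wdeg u Y ≤ D' * ρ ^ (Y.card - 1) / 2 := by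
        by_contra h
        exact hs ⟨hY, not_le.1 h⟩
      have h2 := (wdeg_mono (trim_le (u := u) (D := D') (ρ := ρ) hw.nonneg) (insert v Y)).trans
        (hw.deg (insert v Y) (Finset.insert_nonempty _ _))
      rw [Finset.card_insert_of_notMem hv, Nat.add_sub_cancel] at h2
      have h3 : D * ρ ^ Y.card ≤ D' * ρ ^ (Y.card - 1) / 2 := by
        obtain ⟨j, hj⟩ : ∃ j, Y.card = j + 1 := ⟨Y.card - 1, by have := hY.card_pos; omega⟩
        rw [hj, Nat.add_sub_cancel, pow_succ]
        have : 0 < ρ ^ j := by positivity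
        nlinarith
      linarith

/-- The denominators in the container theorem for `(k + 1)`-uniform hypergraphs. -/
noncomputable def gconst : ℕ → ℝ
  | 0 => 4
  | k + 1 => 2 ^ (k + 4) * gconst k

lemma gconst_ge (k : ℕ) : 4 ≤ gconst k := by
  induction k with
  | zero => simp [gconst]
  | succ k ih =>
    have : (1 : ℝ) ≤ 2 ^ (k + 4) := one_le_pow₀ (by norm_num)
    simp only [gconst]
    nlinarith

/-- The vertices of high degree are numerous, so that the set of the other ones is a small
container. -/
lemma card_lowdeg {X : Finset V} {k : ℕ} {E D θ ρ : ℝ} {w w' : Finset V → ℝ} (hD : 0 < D)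
    (hE : 0 < E) (hw : Spread X (k + 1) D ρ w) (hw'0 : ∀ A, 0 ≤ w' A) (hw' : ∀ A, w' A ≤ w A)
    (hE' : E / 2 ≤ wdeg w' ∅) (hθ : X.card * θ ≤ E / 4) :
    ((X.filter fun v => wdeg w' {v} < θ).card : ℝ) ≤ X.card - E / (D * 4) := by
  have hunif : ∀ A, w' A ≠ 0 → A.card = k + 1 ∧ A ⊆ X := fun A hA =>
    hw.unif A fun h => hA (le_antisymm (h ▸ hw' A) (hw'0 A))
  have h1 := sum_wdeg_singleton hunif
  rw [← Finset.sum_filter_add_sum_filter_not X fun v => wdeg w' {v} < θ] at h1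
  have hcard := Finset.card_filter_add_card_filter_not (s := X) fun v => wdeg w' {v} < θ
  set c₁ := (X.filter fun v => wdeg w' {v} < θ).card
  set c₂ := (X.filter fun v => ¬ wdeg w' {v} < θ).card
  have h2 : ∑ v ∈ X.filter (fun v => wdeg w' {v} < θ), wdeg w' {v} ≤ E / 4 := by
    by_cases hθ0 : 0 ≤ θ
    · refine (Finset.sum_le_card_nsmul _ _ θ fun v hv => (Finset.mem_filter.1 hv).2.le).trans ?_
      rw [nsmul_eq_mul]
      refine le_trans ?_ hθ
      have : (c₁ : ℝ) ≤ X.card := by exact_mod_cast (by omega : c₁ ≤ X.card)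
      gcongr
    · rw [Finset.filter_false_of_mem]
      · simp; linarith
      · intro v _
        have := wdeg_nonneg hw'0 {v}
        linarith
  have h3 : ∑ v ∈ X.filter (fun v => ¬ wdeg w' {v} < θ), wdeg w' {v} ≤ c₂ * D := by
    rw [← nsmul_eq_mul]
    refine Finset.sum_le_card_nsmul _ _ D fun v _ => ?_
    refine (wdeg_mono hw' _).trans ?_
    simpa using hw.deg {v} (Finset.singleton_nonempty _)
  have h4 : (c₁ : ℝ) + c₂ = X.card := by exact_mod_cast hcard
  have h5 : E / 4 ≤ c₂ * D := by
    push_cast at h1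
    have : (0:ℝ) ≤ k * wdeg w' ∅ := mul_nonneg (Nat.cast_nonneg _) (wdeg_nonneg hw'0 _)
    linarith
  have h6 : E / (D * 4) ≤ c₂ := by
    rw [div_le_iff₀ (by positivity)]
    linarith
  linarith

/-- The container theorem. If all degrees in a `(k + 1)`-uniform weighted hypergraph on `X` of
total weight at least `E` are suitably bounded, then its independent sets are covered by few sets
each of which misses a positive proportion of `X`. Given an independent set `T`, up to `b` vertices
of high degree are picked from it one after another; the union of their links is a hypergraph of
uniformity `k`, in which `T` is independent too. Before each pick the edges which contain a set
saturated in the new hypergraph are discarded. If at some moment `T` has no vertex of high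
degree left, the set of vertices of low degree is a container. -/
theorem containers {X : Finset V} {b : ℕ} {ρ : ℝ} (hρ : 0 < ρ) (hb : ρ * X.card = b) :
    ∀ (k : ℕ) (E D : ℝ), 0 < E → 0 < D → ∀ w, Spread X (k + 1) D ρ w → E ≤ wdeg w ∅ →
      Covered {T | T ⊆ X ∧ WIndep w T} ((Fintype.card V + 1) ^ (b * k))
        (X.card - E / (D * gconst k)) := by
  intro k
  induction k with
  | zero =>
    intro E D hE hD w hw hEw
    refine ⟨{X.filter fun v => wdeg w {v} < E / 4 / X.card}, by simp, ?_, ?_⟩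
    · intro C hC
      rw [Finset.mem_singleton] at hC
      subst hC
      refine card_lowdeg hD hE hw hw.nonneg (fun _ => le_rfl) (by linarith) ?_
      rcases Nat.eq_zero_or_pos X.card with h | h
      · simp [h]; positivity
      · have : (0:ℝ) < X.card := by exact_mod_cast h
        apply le_of_eq; field_simp
    · rintro T ⟨hTX, hT⟩
      refine ⟨_, Finset.mem_singleton_self _, fun v hv => Finset.mem_filter.2 ⟨hTX hv, ?_⟩⟩
      have h0 : wdeg w {v} = 0 := by
        refine Finset.sum_eq_zero fun A _ => ?_
        split_ifs with h
        · by_contra hA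
          obtain ⟨x, rfl⟩ := Finset.card_eq_one.1 (hw.unif A hA).1
          rw [Finset.singleton_subset_singleton] at h
          obtain rfl := h
          exact hA (hT {v} (Finset.singleton_subset_iff.2 hv))
        · rfl
      rw [h0]
      have : (0:ℝ) < X.card := by exact_mod_cast Finset.card_pos.2 ⟨v, hTX hv⟩
      positivity
  | succ k ih =>
    intro E D hE hD w hw hEw
    set D' : ℝ := 2 ^ (k + 2) * ρ * D with hD'
    have hD'0 : 0 < D' := by positivity
    set θ : ℝ := E / 4 / X.card with hθ
    -- `E' = b * θ` is the weight aimed at for the hypergraph of lower uniformity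
    set E' : ℝ := ρ * E / 4 with hE'
    have hX : (0:ℝ) < X.card := by
      rcases Nat.eq_zero_or_pos X.card with h | h
      · exfalso
        have h0 := wdeg_empty w
        rw [Finset.sum_eq_zero] at h0
        · linarith
        · intro A _
          by_contra hA
          obtain ⟨h1, h2⟩ := hw.unif A hA
          have := Finset.card_le_card h2
          omega
      · exact_mod_cast h
    have hbθ : b * θ = E' := by rw [← hb, hθ, hE']; field_simp
    have hE'0 : 0 < E' := by positivity
    have hθ0 : 0 < θ := by positivity
    have hratio : E' / (D' * gconst k) = E / (D * gconst (k + 1)) := by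
      have := gconst_ge k
      simp only [gconst, hE', hD']
      have h4 : (2:ℝ) ^ (k + 4) = 2 ^ (k + 2) * 4 := by ring
      rw [h4]
      field_simp
    have h1N : 1 ≤ Fintype.card V + 1 := by omega
    have hsteps : ∀ i ≤ b, ∀ u, Spread X (k + 1) D' ρ u → (b - i) * θ ≤ wdeg u ∅ →
        Covered {T | T ⊆ X ∧ WIndep w T ∧ WIndep u T}
          ((Fintype.card V + 1) ^ (i + b * k)) (X.card - E / (D * gconst (k + 1))) := by
      intro i
      induction i with
      | zero =>
        intro _ u hu hub
        refine (ih E' D' hE'0 hD'0 u hu (by simpa [hbθ] using hub)).mono ?_ (by simp) (by rw [hratio])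
        rintro T ⟨h1, -, h3⟩
        exact ⟨h1, h3⟩
      | succ i ihi =>
        intro hi u hu hub
        by_cases hbig : E' ≤ wdeg u ∅
        · refine (ih E' D' hE'0 hD'0 u hu hbig).mono ?_ (Nat.pow_le_pow_right h1N (by omega))
            (by rw [hratio])
          rintro T ⟨h1, -, h3⟩
          exact ⟨h1, h3⟩
        push Not at hbig
        have htrim : E / 2 ≤ wdeg (trim w u D' ρ) ∅ := by
          have h1 := trim_total hD hD'0 hw hu
          have h2 : 2 * D / D' * (2 ^ (k + 1) * wdeg u ∅) ≤
              2 * D / D' * (2 ^ (k + 1) * E') := by gcongr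
          have h3 : 2 * D / D' * (2 ^ (k + 1) * E') = E / 4 := by
            rw [hD', hE', pow_succ (2:ℝ) (k + 1)]; field_simp
          linarith
        have hpow : (Fintype.card V + 1) ^ (i + 1 + b * k) =
            (Fintype.card V + 1) * (Fintype.card V + 1) ^ (i + b * k) := by
          rw [← pow_succ']; congr 1; ring
        rw [hpow]
        refine covered_step (𝓢 := fun v => {T | (T ⊆ X ∧ WIndep w T ∧ WIndep u T) ∧ v ∈ T ∧
            θ ≤ wdeg (trim w u D' ρ) {v}}) (Nat.one_le_pow _ _ (by omega))
          (X.filter fun v => wdeg (trim w u D' ρ) {v} < θ) ?_ ?_ ?_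
        · refine (card_lowdeg hD hE hw (trim_nonneg hw.nonneg) (trim_le hw.nonneg) htrim ?_).trans ?_
          · rw [hθ]; apply le_of_eq; field_simp
          · have := gconst_ge (k + 1)
            gcongr
        · intro v
          by_cases hv : θ ≤ wdeg (trim w u D' ρ) {v}
          · refine (ihi (by omega) _ (spread_step hρ ?_ hw hu v) ?_).mono ?_ le_rfl le_rfl
            · have h4 : (2:ℝ) ≤ 2 ^ (k + 2) := by
                have : (1:ℝ) ≤ 2 ^ (k+1) := one_le_pow₀ (by norm_num)
                rw [pow_succ]; linarith
              have : 0 < ρ * D := by positivity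
              rw [hD', mul_assoc]; nlinarith
            · rw [wdeg_add, wdeg_wlink]
              push_cast at hub
              simp only [Finset.notMem_empty, if_false, insert_empty_eq]
              linarith
            · rintro T ⟨⟨h1, h2, h3⟩, hvT, -⟩
              refine ⟨h1, h2, fun A hA => ?_⟩
              simp only [h3 A hA, zero_add, wlink]
              split_ifs with hvA
              · rfl
              · by_contra hne
                exact trim_ne hne (h2 _ (Finset.insert_subset hvT hA))
          · refine ⟨∅, by simp, by simp, ?_⟩
            rintro T ⟨-, -, h⟩
            exact absurd h hv
        · intro T hT
          by_cases h : ∃ v ∈ T, θ ≤ wdeg (trim w u D' ρ) {v}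
          · obtain ⟨v, hv, hv'⟩ := h
            exact Or.inr ⟨v, hT, hv, hv'⟩
          · push Not at h
            exact Or.inl fun v hv => Finset.mem_filter.2 ⟨hT.1 hv, h v hv⟩
    have hzero : Spread X (k + 1) D' ρ (fun _ : Finset V => (0:ℝ)) := by
      refine ⟨fun _ => le_rfl, fun A h => absurd rfl h, fun Y _ => ?_⟩
      have : wdeg (fun _ : Finset V => (0:ℝ)) Y = 0 := by simp [wdeg]
      rw [this]
      positivity
    refine (hsteps b le_rfl _ hzero (by simp [wdeg])).mono ?_ ?_ le_rfl
    · rintro T ⟨h1, h2⟩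
      exact ⟨h1, h2, fun _ _ => rfl⟩
    · apply le_of_eq; congr 1; ring

end

/-- Iterated containers: if the members of `𝓣` inside a set of size more than `Z` are covered by
`N` sets smaller by a constant factor, then iterating covers them by sets of size at most `Z`. -/
lemma covered_iterate {V : Type*} [DecidableEq V] {𝓣 : Set (Finset V)} {N : ℕ} {δ Z : ℝ}
    (hN : 1 ≤ N) (hδ1 : δ ≤ 1)
    (h : ∀ X : Finset V, Z < X.card → Covered {T | T ⊆ X ∧ T ∈ 𝓣} N ((1 - δ) * X.card)) :
    ∀ (i : ℕ) (X : Finset V), (1 - δ) ^ i * X.card ≤ Z →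
      Covered {T | T ⊆ X ∧ T ∈ 𝓣} (N ^ i) Z := by
  intro i
  induction i with
  | zero =>
    intro X hX
    exact ⟨{X}, by simp, by simpa using hX, fun T hT => ⟨X, by simp, hT.1⟩⟩
  | succ i ih =>
    intro X hX
    by_cases hXZ : Z < X.card
    · obtain ⟨𝒞, h1, h2, h3⟩ := h X hXZ
      have : ∀ C : Finset V, ∃ 𝒟 : Finset (Finset V), C ∈ 𝒞 → 𝒟.card ≤ N ^ i ∧
          (∀ C ∈ 𝒟, (C.card : ℝ) ≤ Z) ∧ ∀ T ∈ {T | T ⊆ C ∧ T ∈ 𝓣}, ∃ C ∈ 𝒟, T ⊆ C := by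
        intro C
        by_cases hC : C ∈ 𝒞
        · obtain ⟨𝒟, hh⟩ := ih C (by
            refine le_trans ?_ hX
            rw [pow_succ, mul_assoc]
            have : 0 ≤ 1 - δ := by linarith
            have := h2 C hC
            gcongr)
          exact ⟨𝒟, fun _ => hh⟩
        · exact ⟨∅, fun h => absurd h hC⟩
      choose 𝒟 h𝒟 using this
      refine ⟨𝒞.biUnion 𝒟, ?_, ?_, ?_⟩
      · rw [pow_succ']
        exact (Finset.card_biUnion_le_card_mul _ _ _ fun C hC => (h𝒟 C hC).1).trans (by gcongr)
      · intro C hC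
        obtain ⟨C', hC', hCC'⟩ := Finset.mem_biUnion.1 hC
        exact (h𝒟 C' hC').2.1 C hCC'
      · rintro T ⟨hTX, hT⟩
        obtain ⟨C, hC, hTC⟩ := h3 T ⟨hTX, hT⟩
        obtain ⟨C', hC', hTC'⟩ := (h𝒟 C hC).2.2 T ⟨hTC, hT⟩
        exact ⟨C', Finset.mem_biUnion.2 ⟨C, hC, hC'⟩, hTC'⟩
    · exact ⟨{X}, by simpa using Nat.one_le_pow _ _ hN, by simpa using hXZ,
        fun T hT => ⟨X, by simp, hT.1⟩⟩

/-! ### Coloured pencils and supersaturation -/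

section
open Classical
variable {P L : Type*} {r : ℕ}

/-- The members of the set of lines `X` through the point `p`. -/
noncomputable def pencil (I : P → L → Prop) (X : Finset L) (p : P) : Finset L :=
  X.filter fun l => I p l

/-- The lines of `X` through `p` which receive the colour `i` at `p`. -/
noncomputable def cls (I : P → L → Prop) (χ : P → L → Fin r) (X : Finset L) (p : P) (i : Fin r) :
    Finset L := (pencil I X p).filter fun l => χ p l = i

/-- At no point does `T` contain a copy of the complete multipartite graph with parts of sizes
`sz i`, the `i`-th part having colour `i`. -/
def RichFree (I : P → L → Prop) (χ : P → L → Fin r) (sz : Fin r → ℕ) (T : Finset L) : Prop :=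
  ∀ p, ∃ i, (cls I χ T p i).card < sz i

/-- Some colour is heavily underrepresented among the lines of `X` through `p`. -/
def Fails (I : P → L → Prop) (χ : P → L → Fin r) (X : Finset L) (p : P) : Prop :=
  ∃ i, 4 * r * (cls I χ X p i).card < (pencil I X p).card

/-- The coloured copies, in the pencil of `X` at `p`, of the complete multipartite graph with parts
of sizes `sz i`. -/
noncomputable def copies (I : P → L → Prop) (χ : P → L → Fin r) (sz : Fin r → ℕ) (X : Finset L)
    (p : P) : Finset (Finset L) :=
  (pencil I X p).powerset.filter fun A => ∀ i, (A.filter fun l => χ p l = i).card = sz i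

lemma copies_card {I : P → L → Prop} {χ : P → L → Fin r} {sz : Fin r → ℕ} {X : Finset L}
    {p : P} {A : Finset L} (hA : A ∈ copies I χ sz X p) : A.card = ∑ i, sz i := by
  rw [copies, Finset.mem_filter] at hA
  rw [Finset.card_eq_sum_card_fiberwise (f := χ p) (t := Finset.univ) (by simp)]
  exact Finset.sum_congr rfl fun i _ => hA.2 i

lemma prod_choose_le_copies (I : P → L → Prop) (χ : P → L → Fin r) (sz : Fin r → ℕ)
    (X : Finset L) (p : P) :
    ∏ i, (cls I χ X p i).card.choose (sz i) ≤ (copies I χ sz X p).card := by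
  have h1 : (Fintype.piFinset fun i => (cls I χ X p i).powersetCard (sz i)).card =
      ∏ i, (cls I χ X p i).card.choose (sz i) := by
    simp [Fintype.card_piFinset]
  rw [← h1]
  have key : ∀ f ∈ (Fintype.piFinset fun i => (cls I χ X p i).powersetCard (sz i)),
      ∀ i, ((Finset.univ.biUnion f).filter fun l => χ p l = i) = f i := by
    intro f hf i
    rw [Fintype.mem_piFinset] at hf
    ext l
    simp only [Finset.mem_filter, Finset.mem_biUnion, Finset.mem_univ, true_and]
    constructor
    · rintro ⟨⟨j, hj⟩, hl⟩
      have := (Finset.mem_powersetCard.1 (hf j)).1 hj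
      have h2 : χ p l = j := (Finset.mem_filter.1 this).2
      rwa [← hl, h2]
    · intro hl
      exact ⟨⟨i, hl⟩, (Finset.mem_filter.1 ((Finset.mem_powersetCard.1 (hf i)).1 hl)).2⟩
  refine Finset.card_le_card_of_injOn (fun f => Finset.univ.biUnion f) ?_ ?_
  · intro f hf
    have hk := key f hf
    have hf' := Fintype.mem_piFinset.1 hf
    simp only [copies, Finset.coe_filter, Finset.mem_powerset, Set.mem_ofPred_eq]
    refine ⟨?_, fun i => ?_⟩
    · refine Finset.biUnion_subset.2 fun i _ => ?_
      exact (Finset.mem_powersetCard.1 (hf' i)).1.trans (Finset.filter_subset _ _)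
    · rw [hk i]
      exact (Finset.mem_powersetCard.1 (hf' i)).2
  · intro f hf g hg hfg
    funext i
    rw [← key f hf i, ← key g hg i]
    simp only at hfg
    rw [hfg]

/-- Supersaturation at a single point: a pencil of size `d` in which each colour has its fair share
contains at least a constant times `d ^ s` coloured copies, where `s` is the sum of the `sz i`. -/
lemma card_copies_ge {I : P → L → Prop} {χ : P → L → Fin r} {sz : Fin r → ℕ} {X : Finset L}
    {p : P} (hr : 0 < r) (hf : ¬ Fails I χ X p)
    (hd : 8 * r * ∑ i, sz i ≤ (pencil I X p).card) :
    1 / ((8 * r : ℝ) ^ (∑ i, sz i) * ∏ i, ((sz i).factorial : ℝ)) *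
      ((pencil I X p).card : ℝ) ^ (∑ i, sz i) ≤ ((copies I χ sz X p).card : ℝ) := by
  have hr' : (0:ℝ) < r := by exact_mod_cast hr
  have h1 : ((∏ i, (cls I χ X p i).card.choose (sz i) : ℕ) : ℝ) ≤ (copies I χ sz X p).card := by
    exact_mod_cast prod_choose_le_copies I χ sz X p
  refine le_trans ?_ h1
  push_cast
  set d := (pencil I X p).card
  have h2 : ∀ i, ((d : ℝ) / (8 * r)) ^ sz i / ((sz i).factorial : ℝ) ≤
      ((cls I χ X p i).card.choose (sz i) : ℝ) := by
    intro i
    set n := (cls I χ X p i).card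
    have hn : d ≤ 4 * r * n := by
      by_contra h
      exact hf ⟨i, not_le.1 h⟩
    have hsi : sz i ≤ ∑ i, sz i := Finset.single_le_sum (fun _ _ => Nat.zero_le _)
      (Finset.mem_univ i)
    have hn2 : 2 * sz i ≤ n := by
      have : 8 * r * sz i ≤ 4 * r * n := (Nat.mul_le_mul_left _ hsi).trans (hd.trans hn)
      have h4 : 4 * r * (2 * sz i) ≤ 4 * r * n := by linarith
      exact Nat.le_of_mul_le_mul_left h4 (by omega)
    have := Nat.pow_le_choose (α := ℝ) (sz i) n
    have h5 : ((d : ℝ) / (8 * r)) ≤ ((n + 1 - sz i : ℕ) : ℝ) := by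
      rw [div_le_iff₀ (by positivity), Nat.cast_sub (by omega)]
      push_cast
      have h6 : (d : ℝ) ≤ 4 * r * n := by exact_mod_cast hn
      have h7 : (2 * sz i : ℝ) ≤ n := by exact_mod_cast hn2
      nlinarith
    have h8 : ((d : ℝ) / (8 * r)) ^ sz i ≤ ((n + 1 - sz i : ℕ) : ℝ) ^ sz i := by gcongr
    exact (by gcongr : _ ≤ _).trans this
  refine le_trans (le_of_eq ?_) (Finset.prod_le_prod (fun i _ => by positivity) fun i _ => h2 i)
  rw [Finset.prod_div_distrib, Finset.prod_pow_eq_pow_sum, div_pow]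
  field_simp

/-- Each coloured copy at a point `p` of the set `Q` gets the weight `d_p ^ (-k)`, where `d_p` is
the size of the pencil at `p`. This weighting evens out the varying sizes of the pencils. -/
noncomputable def copyWeight (I : P → L → Prop) (χ : P → L → Fin r) (sz : Fin r → ℕ)
    (X : Finset L) (k : ℕ) (Q : Finset P) (A : Finset L) : ℝ :=
  ∑ p ∈ Q, if A ∈ copies I χ sz X p then (((pencil I X p).card : ℝ) ^ k)⁻¹ else 0

lemma wdeg_copyWeight [Fintype L] (I : P → L → Prop) (χ : P → L → Fin r) (sz : Fin r → ℕ)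
    (X : Finset L) (k : ℕ) (Q : Finset P) (Y : Finset L) :
    wdeg (copyWeight I χ sz X k Q) Y = ∑ p ∈ Q, (((pencil I X p).card : ℝ) ^ k)⁻¹ *
      ((copies I χ sz X p).filter (Y ⊆ ·)).card := by
  unfold wdeg copyWeight
  rw [← Finset.sum_filter, Finset.sum_comm]
  refine Finset.sum_congr rfl fun p _ => ?_
  rw [← Finset.sum_filter, Finset.sum_const, nsmul_eq_mul, mul_comm]
  congr 3
  ext A
  simp [and_comm]

lemma card_copies_filter_le {I : P → L → Prop} {χ : P → L → Fin r} {sz : Fin r → ℕ}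
    {X : Finset L} {p : P} {Y : Finset L} :
    ((copies I χ sz X p).filter (Y ⊆ ·)).card ≤ (pencil I X p).card ^ (∑ i, sz i - Y.card) := by
  refine le_trans ?_ (Nat.choose_le_pow _ _)
  rw [← Finset.card_powersetCard]
  refine Finset.card_le_card_of_injOn (fun A => A \ Y) ?_ ?_
  · intro A hA
    simp only [Finset.coe_filter, Set.mem_ofPred_eq] at hA
    rw [Finset.mem_coe, Finset.mem_powersetCard]
    have h1 := hA.1
    rw [copies, Finset.mem_filter, Finset.mem_powerset] at h1
    refine ⟨Finset.sdiff_subset.trans h1.1, ?_⟩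
    rw [Finset.card_sdiff_of_subset hA.2, copies_card hA.1]
  · intro A hA B hB h
    simp only [Finset.coe_filter, Set.mem_ofPred_eq] at hA hB h
    rw [← Finset.sdiff_union_of_subset hA.2, ← Finset.sdiff_union_of_subset hB.2, h]

lemma sum_card_pencil [Fintype P] {I : P → L → Prop} {q : ℕ}
    (hL : ∀ l, (Finset.univ.filter fun p => I p l).card = q + 1) (X : Finset L) :
    ∑ p, (pencil I X p).card = X.card * (q + 1) := by
  have h := Finset.sum_card_bipartiteAbove_eq_sum_card_bipartiteBelow (s := X)
    (t := Finset.univ) (fun l p => I p l)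
  unfold Finset.bipartiteAbove Finset.bipartiteBelow at h
  unfold pencil
  rw [← h]
  simp [hL]

/-- The degrees in the weighted hypergraph of coloured copies. Sets of at least two lines lie in the
pencil of at most one point, so that only single lines see contributions from several points. -/
lemma spread_copyWeight [Fintype P] [Fintype L] {I : P → L → Prop} {χ : P → L → Fin r}
    {sz : Fin r → ℕ} {q b k : ℕ}
    (hL : ∀ l, (Finset.univ.filter fun p => I p l).card = q + 1)
    (hI : ∀ p p' l l', l ≠ l' → I p l → I p l' → I p' l → I p' l' → p = p')
    (hs : ∑ i, sz i = k + 1) (hq : 0 < q) (hb0 : 0 < b)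
    (hb : (q : ℝ) ^ (2 * k) ≤ q * (b : ℝ) ^ k) {X : Finset L} (hX : 0 < X.card) (Q : Finset P)
    (hQ : ∀ p ∈ Q, X.card ≤ 4 * q ^ 2 * (pencil I X p).card) :
    Spread X (k + 1) (4 ^ (k + 1) * (q + 1)) (b / X.card) (copyWeight I χ sz X k Q) := by
  have hq' : (0:ℝ) < q := by exact_mod_cast hq
  have hb' : (0:ℝ) < b := by exact_mod_cast hb0
  have hX' : (0:ℝ) < X.card := by exact_mod_cast hX
  have hd : ∀ p ∈ Q, 0 < (pencil I X p).card := by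
    intro p hp
    by_contra h
    have h0 : (pencil I X p).card = 0 := by omega
    have := hQ p hp
    rw [h0] at this
    omega
  refine ⟨fun A => ?_, fun A hA => ?_, fun Y hY => ?_⟩
  · refine Finset.sum_nonneg fun p _ => ?_
    split_ifs <;> positivity
  · obtain ⟨p, hp, hpA⟩ := Finset.exists_ne_zero_of_sum_ne_zero hA
    have hmem : A ∈ copies I χ sz X p := by
      by_contra h
      simp [h] at hpA
    refine ⟨by rw [copies_card hmem, hs], ?_⟩
    rw [copies, Finset.mem_filter, Finset.mem_powerset] at hmem
    exact hmem.1.trans (Finset.filter_subset _ _)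
  · rw [wdeg_copyWeight]
    have hterm : ∀ p ∈ Q, (((pencil I X p).card : ℝ) ^ k)⁻¹ *
        ((copies I χ sz X p).filter (Y ⊆ ·)).card ≤
        if Y.card ≤ k + 1 ∧ Y ⊆ pencil I X p then
          (((pencil I X p).card : ℝ) ^ (Y.card - 1))⁻¹ else 0 := by
      intro p hp
      have hdp : (0:ℝ) < (pencil I X p).card := by exact_mod_cast hd p hp
      split_ifs with h
      · have h1 : (((copies I χ sz X p).filter (Y ⊆ ·)).card : ℝ) ≤
            ((pencil I X p).card : ℝ) ^ (k + 1 - Y.card) := by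
          have h0 := card_copies_filter_le (I := I) (χ := χ) (sz := sz) (X := X) (p := p) (Y := Y)
          rw [hs] at h0
          calc _ ≤ (((pencil I X p).card ^ (k + 1 - Y.card) : ℕ) : ℝ) := Nat.cast_le.2 h0
            _ = _ := Nat.cast_pow _ _
        rw [inv_mul_le_iff₀ (by positivity), ← div_eq_mul_inv, le_div_iff₀ (by positivity)]
        calc _ ≤ ((pencil I X p).card : ℝ) ^ (k + 1 - Y.card) *
              ((pencil I X p).card : ℝ) ^ (Y.card - 1) := by gcongr
          _ = _ := by
            rw [← pow_add]; congr 1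
            have := hY.card_pos
            omega
      · have : (copies I χ sz X p).filter (Y ⊆ ·) = ∅ := by
          rw [Finset.filter_eq_empty_iff]
          intro A hA hYA
          refine h ⟨?_, ?_⟩
          · rw [← hs, ← copies_card hA]
            exact Finset.card_le_card hYA
          · rw [copies, Finset.mem_filter, Finset.mem_powerset] at hA
            exact hYA.trans hA.1
        simp [this]
    refine (Finset.sum_le_sum hterm).trans ?_
    by_cases hYk : Y.card ≤ k + 1
    swap
    · simp only [hYk, false_and, if_false, Finset.sum_const_zero]
      positivity
    have hsub : ∀ p, Y ⊆ pencil I X p → ∀ l ∈ Y, I p l := fun p h l hl =>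
      (Finset.mem_filter.1 (h hl)).2
    have h41 : (1:ℝ) ≤ 4 ^ (k + 1) := one_le_pow₀ (by norm_num)
    by_cases hY1 : Y.card = 1
    · obtain ⟨l, rfl⟩ := Finset.card_eq_one.1 hY1
      simp only [Finset.card_singleton, Nat.sub_self, pow_zero, inv_one, mul_one]
      rw [← Finset.sum_filter, Finset.sum_const, nsmul_eq_mul, mul_one]
      have h2 : (Q.filter fun p => 1 ≤ k + 1 ∧ {l} ⊆ pencil I X p).card ≤ q + 1 := by
        rw [← hL l]
        refine Finset.card_le_card fun p hp => ?_
        simp only [Finset.mem_filter, Finset.mem_univ, true_and] at hp ⊢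
        exact hsub p hp.2.2 l (Finset.mem_singleton_self l)
      have h3 : ((Q.filter fun p => 1 ≤ k + 1 ∧ {l} ⊆ pencil I X p).card : ℝ) ≤ q + 1 := by
        exact_mod_cast h2
      nlinarith
    · have hY2 : 1 < Y.card := by have := hY.card_pos; omega
      obtain ⟨l, hl, l', hl', hne⟩ := Finset.one_lt_card.1 hY2
      rw [← Finset.sum_filter]
      -- two lines determine their common point
      have hone : (Q.filter fun p => Y.card ≤ k + 1 ∧ Y ⊆ pencil I X p).card ≤ 1 := by
        rw [Finset.card_le_one]
        intro p hp p' hp'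
        simp only [Finset.mem_filter] at hp hp'
        exact hI p p' l l' hne (hsub p hp.2.2 l hl) (hsub p hp.2.2 l' hl')
          (hsub p' hp'.2.2 l hl) (hsub p' hp'.2.2 l' hl')
      set j := Y.card - 1 with hj
      have hjk : j ≤ k := by omega
      have hbound : (((4:ℝ) * q ^ 2) / X.card) ^ j ≤
          4 ^ (k + 1) * (q + 1) * (b / X.card) ^ j := by
        rw [div_pow, div_pow, mul_pow, mul_div_assoc']
        refine div_le_div_of_nonneg_right ?_ (by positivity)
        have h1 : ((q : ℝ) ^ 2) ^ j ≤ (q + 1) * (b : ℝ) ^ j := by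
          rw [← div_le_iff₀ (by positivity), ← div_pow]
          by_cases hc : 1 ≤ (q : ℝ) ^ 2 / b
          · refine (pow_le_pow_right₀ hc hjk).trans ?_
            rw [div_pow, div_le_iff₀ (by positivity), ← pow_mul]
            have : (0:ℝ) < b ^ k := by positivity
            nlinarith
          · refine (pow_le_one₀ (by positivity) (not_le.1 hc).le).trans (by linarith)
        have h2 : (4:ℝ) ^ j ≤ 4 ^ (k + 1) := pow_le_pow_right₀ (by norm_num) (by omega)
        calc (4:ℝ) ^ j * ((q : ℝ) ^ 2) ^ j ≤ 4 ^ (k + 1) * ((q + 1) * (b : ℝ) ^ j) := by gcongr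
          _ = _ := by ring
      refine le_trans ?_ hbound
      refine (Finset.sum_le_card_nsmul _ _ ((((4:ℝ) * q ^ 2) / X.card) ^ j) fun p hp => ?_).trans ?_
      · have hpQ := (Finset.mem_filter.1 hp).1
        have hdp : (0:ℝ) < (pencil I X p).card := by exact_mod_cast hd p hpQ
        rw [← inv_pow]
        gcongr
        rw [inv_le_comm₀ hdp (by positivity), inv_div, div_le_iff₀ (by positivity)]
        have : (X.card : ℝ) ≤ 4 * q ^ 2 * (pencil I X p).card := by exact_mod_cast hQ p hpQ
        linarith
      · rw [nsmul_eq_mul]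
        have h1 : ((Q.filter fun p => Y.card ≤ k + 1 ∧ Y ⊆ pencil I X p).card : ℝ) ≤ 1 := by
          exact_mod_cast hone
        have h2 : 0 ≤ (((4:ℝ) * q ^ 2) / X.card) ^ j := by positivity
        nlinarith

/-- The proportion by which a container shrinks a set of lines. -/
noncomputable def shrink (r k : ℕ) (sz : Fin r → ℕ) : ℝ :=
  1 / ((8 * r : ℝ) ^ (k + 1) * ∏ i, ((sz i).factorial : ℝ)) / (2 * 4 ^ (k + 1) * gconst k)

lemma shrink_pos {r : ℕ} (hr : 0 < r) (k : ℕ) (sz : Fin r → ℕ) : 0 < shrink r k sz := by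
  have := gconst_ge k
  have hr' : (0:ℝ) < r := by exact_mod_cast hr
  have : 0 < ∏ i, ((sz i).factorial : ℝ) := Finset.prod_pos fun i _ => by positivity
  unfold shrink
  positivity

lemma shrink_le_one {r : ℕ} (hr : 0 < r) (k : ℕ) (sz : Fin r → ℕ) : shrink r k sz ≤ 1 := by
  have h1 := gconst_ge k
  have hr' : (1:ℝ) ≤ r := by exact_mod_cast hr
  have h2 : 1 ≤ ∏ i, ((sz i).factorial : ℝ) := by
    exact_mod_cast Finset.one_le_prod' fun i _ => Nat.one_le_of_lt (Nat.factorial_pos (sz i))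
  have h3 : (1:ℝ) ≤ (8 * r : ℝ) ^ (k + 1) := one_le_pow₀ (by linarith)
  have h4 : (1:ℝ) ≤ 4 ^ (k + 1) := one_le_pow₀ (by norm_num)
  unfold shrink
  rw [div_div]
  apply div_le_one_of_le₀ _ (by positivity)
  have h5 : 1 ≤ (8 * r : ℝ) ^ (k + 1) * ∏ i, ((sz i).factorial : ℝ) := one_le_mul_of_one_le_of_one_le h3 h2
  have h6 : 1 ≤ 2 * 4 ^ (k + 1) * gconst k := by nlinarith
  exact one_le_mul_of_one_le_of_one_le h5 h6

/-- If few points fail for `X`, then the sets inside `X` containing no coloured copy are covered by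
few containers of size at most a constant fraction of `|X|`. -/
theorem container_step [Fintype P] [Fintype L] {I : P → L → Prop} {χ : P → L → Fin r}
    {sz : Fin r → ℕ} {q b k : ℕ}
    (hr : 0 < r) (hP : Fintype.card P ≤ q ^ 3)
    (hL : ∀ l, (Finset.univ.filter fun p => I p l).card = q + 1)
    (hI : ∀ p p' l l', l ≠ l' → I p l → I p l' → I p' l → I p' l' → p = p')
    (hs : ∑ i, sz i = k + 1) (hq : 0 < q) (hb0 : 0 < b)
    (hb : (q : ℝ) ^ (2 * k) ≤ q * (b : ℝ) ^ k) {X : Finset L}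
    (hX : 32 * r * (k + 1) * q ^ 2 ≤ X.card)
    (hfail : 4 * ∑ p with Fails I χ X p, (pencil I X p).card ≤ X.card * (q + 1)) :
    Covered {T | T ⊆ X ∧ T ∈ {T | RichFree I χ sz T}} ((Fintype.card L + 1) ^ (b * k))
      ((1 - shrink r k sz) * X.card) := by
  have hX0 : 0 < X.card := lt_of_lt_of_le (by positivity) hX
  have hX0' : (0:ℝ) < X.card := by exact_mod_cast hX0
  have hq' : (0:ℝ) < q := by exact_mod_cast hq
  have hb' : (0:ℝ) < b := by exact_mod_cast hb0
  have hr' : (0:ℝ) < r := by exact_mod_cast hr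
  set Q : Finset P := Finset.univ.filter fun p => ¬ Fails I χ X p ∧
    X.card ≤ 4 * q ^ 2 * (pencil I X p).card with hQ
  have hspread := spread_copyWeight (χ := χ) (sz := sz) hL hI hs hq hb0 hb hX0 Q
    fun p hp => (Finset.mem_filter.1 hp).2.2
  -- at least half of all incidences lie at points of `Q`
  have hhalf : (X.card : ℝ) * (q + 1) / 2 ≤ ∑ p ∈ Q, ((pencil I X p).card : ℝ) := by
    have htot := sum_card_pencil hL X
    have hsplit : ∑ p, (pencil I X p).card ≤ ∑ p ∈ Q, (pencil I X p).card +
        ∑ p with Fails I χ X p, (pencil I X p).card +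
        ∑ p with 4 * q ^ 2 * (pencil I X p).card < X.card, (pencil I X p).card := by
      rw [hQ, Finset.sum_filter, Finset.sum_filter, Finset.sum_filter,
        ← Finset.sum_add_distrib, ← Finset.sum_add_distrib]
      refine Finset.sum_le_sum fun p _ => ?_
      by_cases h1 : Fails I χ X p <;> by_cases h2 : X.card ≤ 4 * q ^ 2 * (pencil I X p).card <;>
        simp [h1, h2, not_le.1]
    have hsmall : 4 * q ^ 2 * ∑ p with 4 * q ^ 2 * (pencil I X p).card < X.card,
        (pencil I X p).card ≤ q ^ 3 * X.card := by
      rw [Finset.mul_sum]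
      refine (Finset.sum_le_card_nsmul (Finset.univ.filter fun p =>
        4 * q ^ 2 * (pencil I X p).card < X.card) (fun p => 4 * q ^ 2 * (pencil I X p).card) X.card
        fun p hp => (Finset.mem_filter.1 hp).2.le).trans ?_
      rw [smul_eq_mul]
      exact Nat.mul_le_mul_right _ ((Finset.card_le_univ _).trans hP)
    have hsmall' : 4 * ∑ p with 4 * q ^ 2 * (pencil I X p).card < X.card,
        (pencil I X p).card ≤ X.card * q := by
      refine le_of_mul_le_mul_left ?_ (by positivity : 0 < q ^ 2)
      calc _ = _ := by ring
        _ ≤ _ := hsmall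
        _ = _ := by ring
    have : X.card * (q + 1) ≤ 2 * ∑ p ∈ Q, (pencil I X p).card := by nlinarith
    have : (X.card : ℝ) * (q + 1) ≤ 2 * ∑ p ∈ Q, ((pencil I X p).card : ℝ) := by exact_mod_cast this
    linarith
  set c : ℝ := 1 / ((8 * r : ℝ) ^ (k + 1) * ∏ i, ((sz i).factorial : ℝ)) with hc
  have hfac : 0 < ∏ i, ((sz i).factorial : ℝ) := Finset.prod_pos fun i _ => by positivity
  have hc0 : 0 < c := by positivity
  have hE : c * (X.card * (q + 1) / 2) ≤ wdeg (copyWeight I χ sz X k Q) ∅ := by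
    rw [wdeg_copyWeight]
    refine (mul_le_mul_of_nonneg_left hhalf hc0.le).trans ?_
    rw [Finset.mul_sum]
    refine Finset.sum_le_sum fun p hp => ?_
    obtain ⟨hp1, hp2⟩ := (Finset.mem_filter.1 hp).2
    have hd : 8 * r * ∑ i, sz i ≤ (pencil I X p).card := by
      rw [hs]
      refine le_of_mul_le_mul_left ?_ (by positivity : 0 < 4 * q ^ 2)
      calc _ = 32 * r * (k + 1) * q ^ 2 := by ring
        _ ≤ _ := hX.trans hp2
    have hd0 : 0 < (pencil I X p).card := by
      refine lt_of_lt_of_le ?_ hd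
      rw [hs]; positivity
    have hd0' : (0:ℝ) < (pencil I X p).card := by exact_mod_cast hd0
    have h1 := card_copies_ge hr hp1 hd
    rw [hs] at h1
    simp only [Finset.empty_subset, Finset.filter_true]
    rw [inv_mul_eq_div, le_div_iff₀ (by positivity)]
    refine le_trans (le_of_eq ?_) h1
    rw [hc]; ring
  have hmain := containers (X := X) (b := b) (ρ := b / X.card) (by positivity)
    (by field_simp) k (c * (X.card * (q + 1) / 2)) (4 ^ (k + 1) * (q + 1))
    (by positivity) (by positivity) _ hspread hE
  refine hmain.mono ?_ le_rfl (le_of_eq ?_)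
  · rintro T ⟨hTX, hT⟩
    refine ⟨hTX, fun A hA => ?_⟩
    by_contra hne
    obtain ⟨p, hp, hpA⟩ := Finset.exists_ne_zero_of_sum_ne_zero hne
    have hmem : A ∈ copies I χ sz X p := by
      by_contra h
      simp [h] at hpA
    rw [copies, Finset.mem_filter, Finset.mem_powerset] at hmem
    obtain ⟨i, hi⟩ := hT p
    refine absurd hi (not_lt.2 ?_)
    rw [← hmem.2 i]
    refine Finset.card_le_card fun l hl => ?_
    rw [Finset.mem_filter] at hl
    exact Finset.mem_filter.2 ⟨Finset.mem_filter.2 ⟨hA hl.1,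
      (Finset.mem_filter.1 (hmem.1 hl.1)).2⟩, hl.2⟩
  · have := gconst_ge k
    unfold shrink
    rw [← hc]
    field_simp
end

/-! ### Random colourings -/

section
open Classical
variable {P L : Type*} {r : ℕ}

lemma sum_prod_pi {ι κ : Type*} [Fintype ι] [Fintype κ] (f : ι → κ → ℝ) :
    ∑ χ : ι → κ, ∏ p, f p (χ p) = ∏ p, ∑ c, f p c := by
  rw [Finset.prod_univ_sum]
  simp [Fintype.piFinset_univ]

/-- An exponential Markov bound for the number of colourings giving a fixed colour to less than a
fraction `1 / (4 * r)` of the set `B`. -/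
lemma card_rare_colour_le [Fintype L] (hr : 0 < r) (B : Finset L) (i : Fin r) :
    (∑ c : L → Fin r, if 4 * r * (B.filter fun l => c l = i).card < B.card then
      Real.exp (B.card / (4 * r)) else 0) ≤ (r : ℝ) ^ Fintype.card L := by
  have hr' : (0:ℝ) < r := by exact_mod_cast hr
  have h1 : ∀ c : L → Fin r, (if 4 * r * (B.filter fun l => c l = i).card < B.card then
      Real.exp (B.card / (4 * r)) else 0) ≤ Real.exp (B.card / (2 * r)) *
      ∏ l, if l ∈ B ∧ c l = i then Real.exp (-1) else 1 := by
    intro c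
    have h2 : (∏ l, if l ∈ B ∧ c l = i then Real.exp (-1) else 1) =
        Real.exp (-((B.filter fun l => c l = i).card : ℝ)) := by
      rw [← Finset.prod_filter, Finset.prod_const, ← Real.exp_nat_mul]
      congr 1
      have : (Finset.univ.filter fun l => l ∈ B ∧ c l = i) = B.filter fun l => c l = i := by
        ext l; simp
      rw [this]; ring
    rw [h2, ← Real.exp_add]
    split_ifs with h
    · apply Real.exp_le_exp.2
      have h3 : 4 * (r:ℝ) * (B.filter fun l => c l = i).card < B.card := by exact_mod_cast h
      have h4 : ((B.filter fun l => c l = i).card : ℝ) ≤ B.card / (4 * r) := by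
        rw [le_div_iff₀ (by positivity)]; linarith
      have h5 : (B.card : ℝ) / (2 * r) = B.card / (4 * r) + B.card / (4 * r) := by
        field_simp; ring
      linarith
    · positivity
  refine (Finset.sum_le_sum fun c _ => h1 c).trans ?_
  rw [← Finset.mul_sum, sum_prod_pi fun (l : L) (a : Fin r) =>
    if l ∈ B ∧ a = i then Real.exp (-1) else 1]
  have h2 : ∀ l : L, (∑ a : Fin r, if l ∈ B ∧ a = i then Real.exp (-1) else 1) ≤
      r * (if l ∈ B then Real.exp (-(1 / (2 * r))) else 1) := by
    intro l
    by_cases hl : l ∈ B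
    · simp only [hl, true_and, if_true]
      rw [← Finset.sum_erase_add _ _ (Finset.mem_univ i)]
      rw [if_pos rfl, Finset.sum_congr rfl (g := fun _ => (1:ℝ)) (fun a ha => by
        simp [Finset.ne_of_mem_erase ha])]
      simp only [Finset.sum_const, Finset.card_erase_of_mem (Finset.mem_univ i),
        Finset.card_univ, Fintype.card_fin, nsmul_eq_mul, mul_one]
      rw [Nat.cast_sub (by omega)]
      have h3 : Real.exp (-1) ≤ 1 / 2 := by
        have := Real.exp_one_gt_d9
        rw [Real.exp_neg, ← one_div]
        gcongr
        linarith
      have h4 := Real.add_one_le_exp (-(1 / (2 * r : ℝ)))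
      have h5 : (r : ℝ) * (-(1 / (2 * r)) + 1) = r - 1 / 2 := by field_simp; ring
      have h6 := mul_le_mul_of_nonneg_left h4 hr'.le
      push_cast
      linarith
    · simp [hl]
  calc _ ≤ Real.exp (B.card / (2 * r)) *
        ∏ l : L, (r * (if l ∈ B then Real.exp (-(1 / (2 * r))) else 1) : ℝ) := by
        refine mul_le_mul_of_nonneg_left (Finset.prod_le_prod (fun l _ =>
          Finset.sum_nonneg fun a _ => by split_ifs <;> positivity) fun l _ => h2 l)
          (Real.exp_pos _).le
    _ = _ := by
        rw [Finset.prod_mul_distrib, Finset.prod_const, Finset.card_univ, Finset.prod_ite_mem,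
          Finset.univ_inter, Finset.prod_const, ← Real.exp_nat_mul, mul_left_comm, ← Real.exp_add]
        have : (B.card : ℝ) / (2 * r) + B.card * (-(1 / (2 * r))) = 0 := by ring
        rw [this]; simp

/-- For a fixed `X`, few colourings `χ` have many incidences of `X` at failing points. -/
lemma card_bad_colouring_le [Fintype P] [Fintype L] (hr : 0 < r) (I : P → L → Prop)
    (X : Finset L) (M : ℝ) :
    ((Finset.univ.filter fun χ : P → L → Fin r =>
      M < 4 * ∑ p with Fails I χ X p, ((pencil I X p).card : ℝ)).card : ℝ) ≤
    Real.exp (-(M / (16 * r))) * ((1 + r) ^ Fintype.card P *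
      Fintype.card (P → L → Fin r)) := by
  have hr' : (0:ℝ) < r := by exact_mod_cast hr
  -- the failing of a point depends only on the colouring at this point
  let F : P → (L → Fin r) → Prop := fun p c =>
    ∃ i, 4 * r * ((pencil I X p).filter fun l => c l = i).card < (pencil I X p).card
  let f : P → (L → Fin r) → ℝ := fun p c =>
    if F p c then Real.exp ((pencil I X p).card / (4 * r)) else 1
  have h1 : ((Finset.univ.filter fun χ : P → L → Fin r =>
      M < 4 * ∑ p with Fails I χ X p, ((pencil I X p).card : ℝ)).card : ℝ) ≤
      ∑ χ : P → L → Fin r, Real.exp (-(M / (16 * r))) * ∏ p, f p (χ p) := by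
    rw [Finset.card_eq_sum_ones, Nat.cast_sum, Finset.sum_filter]
    refine Finset.sum_le_sum fun χ _ => ?_
    have h2 : ∏ p, f p (χ p) =
        Real.exp (∑ p with Fails I χ X p, ((pencil I X p).card : ℝ) / (4 * r)) := by
      rw [Real.exp_sum, Finset.prod_filter]
      refine Finset.prod_congr rfl fun p _ => ?_
      by_cases hF : Fails I χ X p
      · rw [if_pos hF]
        exact if_pos hF
      · rw [if_neg hF]
        exact if_neg hF
    rw [h2, ← Real.exp_add]
    split_ifs with h
    · rw [Nat.cast_one]
      apply Real.one_le_exp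
      rw [← Finset.sum_div]
      generalize (∑ p with Fails I χ X p, ((pencil I X p).card : ℝ)) = S at h
      have : M / (16 * r) ≤ (4 * S) / (16 * r) := by
        gcongr
      have h5 : (4 * S) / (16 * r) = S / (4 * r) := by field_simp; ring
      linarith
    · positivity
  refine h1.trans ?_
  rw [← Finset.mul_sum, sum_prod_pi f]
  gcongr
  calc ∏ p, ∑ c, f p c ≤ ∏ p : P, ((1 + r) * (r : ℝ) ^ Fintype.card L) := by
        refine Finset.prod_le_prod (fun p _ => ?_) fun p _ => ?_
        · exact Finset.sum_nonneg fun c _ => by simp only [f]; split_ifs <;> positivity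
        · have h3 : ∀ c, f p c ≤ 1 + ∑ i : Fin r,
              if 4 * r * ((pencil I X p).filter fun l => c l = i).card < (pencil I X p).card then
                Real.exp ((pencil I X p).card / (4 * r)) else 0 := by
            intro c
            have hnn : ∀ i ∈ (Finset.univ : Finset (Fin r)), (0:ℝ) ≤
                if 4 * r * ((pencil I X p).filter fun l => c l = i).card < (pencil I X p).card then
                Real.exp ((pencil I X p).card / (4 * r)) else 0 := by
              intro i _; split_ifs <;> positivity
            simp only [f]
            split_ifs with h
            · obtain ⟨i, hi⟩ := h
              have := Finset.single_le_sum hnn (Finset.mem_univ i)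
              rw [if_pos hi] at this
              linarith
            · have := Finset.sum_nonneg hnn
              linarith
          refine (Finset.sum_le_sum fun c _ => h3 c).trans ?_
          rw [Finset.sum_add_distrib, Finset.sum_comm]
          have h4 := Finset.sum_le_sum fun i (_ : i ∈ (Finset.univ : Finset (Fin r))) =>
            card_rare_colour_le hr (pencil I X p) i
          simp only [Finset.sum_const, Finset.card_univ, nsmul_eq_mul, Fintype.card_fin] at h4
          have h6 : ∑ _c : L → Fin r, (1:ℝ) = (r:ℝ) ^ Fintype.card L := by simp
          rw [h6]
          linarith
    _ = _ := by
      rw [Finset.prod_const, mul_pow, Finset.card_univ]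
      simp

/-- Some colouring fails at few points for all large `X` simultaneously. -/
theorem exists_colouring [Fintype P] [Fintype L] {q : ℕ} (hr : 0 < r) (I : P → L → Prop)
    (hP : Fintype.card P ≤ q ^ 3) (hLc : Fintype.card L ≤ q ^ 4) (hq0 : 0 < q)
    (hq : 2 * (q : ℝ) ^ 4 * Real.exp (-(q / (32 * r))) ≤ 1) :
    ∃ χ : P → L → Fin r, ∀ X : Finset L, 32 * r ^ 2 * q ^ 2 ≤ X.card →
      4 * ∑ p with Fails I χ X p, (pencil I X p).card ≤ X.card * (q + 1) := by
  have hr' : (1:ℝ) ≤ r := by exact_mod_cast hr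
  have hq' : (1:ℝ) ≤ q := by exact_mod_cast hq0
  by_contra hcon
  push Not at hcon
  have : Nonempty (Fin r) := ⟨⟨0, hr⟩⟩
  set Tot : ℝ := ((Fintype.card (P → L → Fin r) : ℕ) : ℝ) with hTot
  have hTot0 : 0 < Tot := by
    rw [hTot]; exact_mod_cast Fintype.card_pos
  set y : ℝ := Real.exp (-(q / (32 * r))) with hy
  have hy0 : 0 < y := Real.exp_pos _
  have h1 : Tot ≤ ∑ X ∈ (Finset.univ : Finset (Finset L)).erase ∅, y ^ X.card * Tot := by
    calc Tot = ((Finset.univ : Finset (P → L → Fin r)).card : ℝ) := by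
          rw [hTot, Finset.card_univ]
      _ ≤ ((((Finset.univ : Finset (Finset L)).filter
            fun X => 32 * r ^ 2 * q ^ 2 ≤ X.card).biUnion fun X =>
          Finset.univ.filter fun χ : P → L → Fin r =>
            ((X.card * (q + 1) : ℕ) : ℝ) <
              4 * ∑ p with Fails I χ X p, ((pencil I X p).card : ℝ)).card : ℝ) := by
          refine Nat.cast_le.2 (Finset.card_le_card fun χ _ => ?_)
          obtain ⟨X, hX, hX2⟩ := hcon χ
          refine Finset.mem_biUnion.2 ⟨X, Finset.mem_filter.2 ⟨Finset.mem_univ _, hX⟩,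
            Finset.mem_filter.2 ⟨Finset.mem_univ _, ?_⟩⟩
          exact_mod_cast hX2
      _ ≤ ∑ X ∈ (Finset.univ : Finset (Finset L)).filter
            fun X => 32 * r ^ 2 * q ^ 2 ≤ X.card, ((Finset.univ.filter fun χ : P → L → Fin r =>
            ((X.card * (q + 1) : ℕ) : ℝ) <
              4 * ∑ p with Fails I χ X p, ((pencil I X p).card : ℝ)).card : ℝ) := by
          exact_mod_cast Finset.card_biUnion_le
      _ ≤ ∑ X ∈ (Finset.univ : Finset (Finset L)).filter
            fun X => 32 * r ^ 2 * q ^ 2 ≤ X.card, y ^ X.card * Tot := by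
          refine Finset.sum_le_sum fun X hX => ?_
          have hX2 := (Finset.mem_filter.1 hX).2
          refine (card_bad_colouring_le hr I X _).trans ?_
          rw [← mul_assoc]
          gcongr
          have hX3 : 32 * (r:ℝ) ^ 2 * q ^ 2 ≤ X.card := by exact_mod_cast hX2
          have h2 : (1 + (r:ℝ)) ^ Fintype.card P ≤ Real.exp (r * q ^ 3) := by
            calc (1 + (r:ℝ)) ^ Fintype.card P ≤ (1 + (r:ℝ)) ^ (q ^ 3) :=
                  pow_le_pow_right₀ (by linarith) hP
              _ ≤ (Real.exp r) ^ (q ^ 3) := by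
                  gcongr
                  have := Real.add_one_le_exp (r:ℝ)
                  linarith
              _ = _ := by rw [← Real.exp_nat_mul]; congr 1; push_cast; ring
          refine (mul_le_mul_of_nonneg_left h2 (Real.exp_pos _).le).trans ?_
          rw [← Real.exp_add, hy, ← Real.exp_nat_mul]
          apply Real.exp_le_exp.2
          push_cast
          have h3 : (r:ℝ) * q ^ 3 ≤ X.card * q / (32 * r) := by
            rw [le_div_iff₀ (by positivity)]
            nlinarith
          have h4 : (X.card : ℝ) * q / (16 * r) ≤ X.card * (q + 1) / (16 * r) := by
            gcongr; linarith
          have h5 : (X.card : ℝ) * q / (16 * r) = X.card * q / (32 * r) + X.card * q / (32 * r) := by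
            field_simp; ring
          have h6 : (X.card : ℝ) * -(q / (32 * r)) = -(X.card * q / (32 * r)) := by ring
          rw [h6]
          linarith
      _ ≤ _ := by
          refine Finset.sum_le_sum_of_subset_of_nonneg (fun X hX => ?_) fun _ _ _ => by positivity
          have hX2 := (Finset.mem_filter.1 hX).2
          refine Finset.mem_erase.2 ⟨?_, Finset.mem_univ _⟩
          rintro rfl
          have : 0 < 32 * r ^ 2 * q ^ 2 := by positivity
          rw [Finset.card_empty] at hX2
          omega
  rw [← Finset.sum_mul] at h1
  have h2 : 1 ≤ ∑ X ∈ (Finset.univ : Finset (Finset L)).erase ∅, y ^ X.card := by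
    by_contra h
    push Not at h
    nlinarith
  have h3 : ∑ X : Finset L, y ^ X.card = (y + 1) ^ Fintype.card L := by
    have := Fintype.sum_pow_mul_eq_add_pow L y 1
    simpa using this
  rw [← Finset.sum_erase_add _ _ (Finset.mem_univ ∅)] at h3
  have h4 : (y + 1) ^ Fintype.card L ≤ Real.exp (1 / 2) := by
    calc (y + 1) ^ Fintype.card L ≤ (Real.exp y) ^ Fintype.card L := by
          gcongr
          exact Real.add_one_le_exp y
      _ = Real.exp (Fintype.card L * y) := by rw [Real.exp_nat_mul]
      _ ≤ _ := by
          apply Real.exp_le_exp.2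
          have : (Fintype.card L : ℝ) ≤ (q : ℝ) ^ 4 := by exact_mod_cast hLc
          nlinarith
  have h5 : Real.exp (1 / 2) < 2 := by
    have h6 : Real.exp (1 / 2) * Real.exp (1 / 2) = Real.exp 1 := by
      rw [← Real.exp_add]; norm_num
    have := Real.exp_one_lt_d9
    nlinarith [Real.exp_pos (1 / 2 : ℝ)]
  simp only [Finset.card_empty, pow_zero] at h3
  linarith
end

/-! ### Sampling -/

lemma choose_mul_pow_le {m n : ℕ} (hmn : m ≤ n) (t : ℕ) :
    m.choose t * n ^ t ≤ n.choose t * m ^ t := by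
  have key : m.descFactorial t * n ^ t ≤ n.descFactorial t * m ^ t := by
    induction t with
    | zero => simp
    | succ t ih =>
      have h1 : (m - t) * n ≤ (n - t) * m := by
        rw [Nat.sub_mul, Nat.sub_mul, mul_comm n m]
        exact Nat.sub_le_sub_left (Nat.mul_le_mul_left _ hmn) _
      calc m.descFactorial (t + 1) * n ^ (t + 1)
          = ((m - t) * n) * (m.descFactorial t * n ^ t) := by
            rw [Nat.descFactorial_succ]; ring
        _ ≤ ((n - t) * m) * (n.descFactorial t * m ^ t) := Nat.mul_le_mul h1 ih
        _ = _ := by rw [Nat.descFactorial_succ]; ring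
  rw [Nat.descFactorial_eq_factorial_mul_choose, Nat.descFactorial_eq_factorial_mul_choose,
    mul_assoc, mul_assoc] at key
  exact Nat.le_of_mul_le_mul_left key (Nat.factorial_pos t)

/-- If a uniformly random `m`-set contains on average less than one member of `Bad`, then some
`m`-set contains none. -/
theorem exists_avoiding {L : Type*} [Fintype L] [DecidableEq L] {t m : ℕ}
    (Bad : Finset (Finset L)) (hBad : ∀ T ∈ Bad, T.card = t) (hm : m ≤ Fintype.card L)
    (h : Bad.card * m ^ t < Fintype.card L ^ t) :
    ∃ W : Finset L, W.card = m ∧ ∀ T ∈ Bad, ¬ T ⊆ W := by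
  by_cases htm : t ≤ m
  swap
  · obtain ⟨W, -, hW⟩ := Finset.exists_subset_card_eq (s := (Finset.univ : Finset L))
      (n := m) (by simpa using hm)
    refine ⟨W, hW, fun T hT hTW => htm ?_⟩
    rw [← hBad T hT, ← hW]
    exact Finset.card_le_card hTW
  set n := Fintype.card L with hn
  by_contra hcon
  push Not at hcon
  have h1 : Finset.univ.powersetCard m ⊆ Bad.biUnion fun T =>
      (Finset.univ.powersetCard m : Finset (Finset L)).filter fun W => T ⊆ W := by
    intro W hW
    obtain ⟨T, hT, hTW⟩ := hcon W (Finset.mem_powersetCard.1 hW).2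
    exact Finset.mem_biUnion.2 ⟨T, hT, Finset.mem_filter.2 ⟨hW, hTW⟩⟩
  have h2 : ∀ T ∈ Bad, ((Finset.univ.powersetCard m : Finset (Finset L)).filter
      fun W => T ⊆ W).card ≤ (n - t).choose (m - t) := by
    intro T hT
    have h3 : ((Finset.univ \ T).powersetCard (m - t)).card = (n - t).choose (m - t) := by
      rw [Finset.card_powersetCard, Finset.card_sdiff_of_subset (Finset.subset_univ T),
        Finset.card_univ, hBad T hT]
    rw [← h3]
    refine Finset.card_le_card_of_injOn (fun W => W \ T) ?_ ?_
    · intro W hW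
      have hW := Finset.mem_filter.1 hW
      have hWm := (Finset.mem_powersetCard.1 hW.1).2
      refine Finset.mem_powersetCard.2 ⟨Finset.sdiff_subset_sdiff (Finset.subset_univ _) le_rfl, ?_⟩
      rw [Finset.card_sdiff_of_subset hW.2, hWm, hBad T hT]
    · intro W hW W' hW' hWW
      have hW := (Finset.mem_filter.1 hW).2
      have hW' := (Finset.mem_filter.1 hW').2
      rw [← Finset.sdiff_union_of_subset hW, ← Finset.sdiff_union_of_subset hW']
      exact congrArg (· ∪ T) hWW
  have h3 : n.choose m ≤ Bad.card * (n - t).choose (m - t) := by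
    have := Finset.card_le_card h1
    rw [Finset.card_powersetCard, Finset.card_univ] at this
    exact this.trans (Finset.card_biUnion_le_card_mul _ _ _ h2)
  have h4 := Nat.choose_mul (n := n) htm
  have h5 : 0 < (n - t).choose (m - t) := Nat.choose_pos (by omega)
  have h6 : n.choose t ≤ Bad.card * m.choose t := by
    refine Nat.le_of_mul_le_mul_right ?_ h5
    rw [← h4]
    calc n.choose m * m.choose t ≤ (Bad.card * (n - t).choose (m - t)) * m.choose t :=
          Nat.mul_le_mul_right _ h3
      _ = _ := by ring
  have h7 : 0 < n.choose t := Nat.choose_pos (htm.trans hm)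
  have h8 := choose_mul_pow_le hm t
  have h9 : n.choose t * n ^ t ≤ n.choose t * (Bad.card * m ^ t) := by
    calc n.choose t * n ^ t ≤ Bad.card * m.choose t * n ^ t := Nat.mul_le_mul_right _ h6
      _ = Bad.card * (m.choose t * n ^ t) := by ring
      _ ≤ Bad.card * (n.choose t * m ^ t) := Nat.mul_le_mul_left _ h8
      _ = _ := by ring
  have := Nat.le_of_mul_le_mul_left h9 h7
  omega

/-- A covered family contains few sets of size `t`. -/
lemma Covered.card_le {L : Type*} [DecidableEq L] {𝓣 : Set (Finset L)} {N Z t : ℕ}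
    (h : Covered 𝓣 N Z) (A : Finset (Finset L)) (hA : ∀ T ∈ A, T ∈ 𝓣 ∧ T.card = t) :
    A.card ≤ N * Z.choose t := by
  obtain ⟨𝒞, h1, h2, h3⟩ := h
  have h4 : A ⊆ 𝒞.biUnion fun C => C.powersetCard t := by
    intro T hT
    obtain ⟨C, hC, hTC⟩ := h3 T (hA T hT).1
    exact Finset.mem_biUnion.2 ⟨C, hC, Finset.mem_powersetCard.2 ⟨hTC, (hA T hT).2⟩⟩
  refine (Finset.card_le_card h4).trans ((Finset.card_biUnion_le_card_mul _ _ (Z.choose t)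
    fun C hC => ?_).trans (Nat.mul_le_mul_right _ h1))
  rw [Finset.card_powersetCard]
  exact Nat.choose_le_choose _ (by exact_mod_cast h2 C hC)

/-! ### The choice of parameters -/

/-- The union bound over containers succeeds: `K * B * lam ^ 2 < t` pays for the number of containers and
`lam ^ 3 ≥ 2 * exp 2 * C` for the number of `t`-subsets of each container. -/
lemma union_bound {M Z m n q B lam K C : ℝ} {t : ℕ} (hq : 0 < q) (hB : 0 < B) (hlam : 0 < lam)
    (hC : 0 < C) (hM0 : 0 ≤ M) (hm0 : 0 ≤ m)
    (hM : M ≤ Real.exp (K * B * lam ^ 2)) (hZ : Z ≤ (C * q ^ 2) ^ t / t.factorial)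
    (hn : q ^ 4 ≤ 2 * n) (hm : m ≤ q ^ 2 * B) (ht : B * lam ^ 3 ≤ t) (hK : K < lam)
    (hl : 2 * Real.exp 2 * C ≤ lam ^ 3) : M * Z * m ^ t < n ^ t := by
  have hn0 : 0 < n := by have : 0 < q ^ 4 := by positivity
                         linarith
  have ht0 : 0 < (t : ℝ) := lt_of_lt_of_le (by positivity) ht
  have h1 : (t : ℝ) ^ t / t.factorial ≤ Real.exp t := Real.pow_div_factorial_le_exp _ ht0.le t
  -- the factor `(2 C B) ^ t` compares with `(t e ^ (-2)) ^ t`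
  have h2 : 2 * C * B ≤ t * Real.exp (-2) := by
    have : 2 * C * B * Real.exp 2 ≤ t := by
      refine le_trans ?_ ht
      calc 2 * C * B * Real.exp 2 = B * (2 * Real.exp 2 * C) := by ring
        _ ≤ _ := by gcongr
    rw [Real.exp_neg, ← div_eq_mul_inv, le_div_iff₀ (Real.exp_pos _)]
    exact this
  have h3 : (C * q ^ 2) * m ≤ (2 * C * B) * n := by
    calc (C * q ^ 2) * m ≤ (C * q ^ 2) * (q ^ 2 * B) := by gcongr
      _ = C * B * q ^ 4 := by ring
      _ ≤ C * B * (2 * n) := by gcongr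
      _ = _ := by ring
  have h4 : Z * m ^ t ≤ Real.exp (-t) * n ^ t := by
    calc Z * m ^ t ≤ (C * q ^ 2) ^ t / t.factorial * m ^ t := by gcongr
      _ = ((C * q ^ 2) * m) ^ t / t.factorial := by rw [mul_pow _ m]; ring
      _ ≤ ((2 * C * B) * n) ^ t / t.factorial := by gcongr
      _ ≤ ((t * Real.exp (-2)) * n) ^ t / t.factorial := by gcongr
      _ = (t : ℝ) ^ t / t.factorial * (Real.exp (-2) ^ t * n ^ t) := by
          rw [mul_pow, mul_pow]; ring
      _ ≤ Real.exp t * (Real.exp (-2) ^ t * n ^ t) := by gcongr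
      _ = _ := by
          rw [← mul_assoc, ← Real.exp_nat_mul, ← Real.exp_add]
          congr 2; ring
  have h5 : K * B * lam ^ 2 < t := by
    refine lt_of_lt_of_le ?_ ht
    have : 0 < B * lam ^ 2 := by positivity
    nlinarith
  calc M * Z * m ^ t = M * (Z * m ^ t) := by ring
    _ ≤ M * (Real.exp (-t) * n ^ t) := by gcongr
    _ ≤ Real.exp (K * B * lam ^ 2) * (Real.exp (-t) * n ^ t) := by gcongr
    _ = Real.exp (K * B * lam ^ 2 - t) * n ^ t := by
        rw [← mul_assoc, ← Real.exp_add]; rfl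
    _ < 1 * n ^ t := by
        gcongr
        rw [Real.exp_lt_one_iff]; linarith
    _ = _ := one_mul _

set_option maxHeartbeats 1000000 in
/-- All the numerical requirements of the argument hold for large `q`. -/
theorem parameters (r k C : ℕ) (hr : 0 < r) (hk : 1 ≤ k) (hC : 1 ≤ C) {c : ℝ} (hc : 0 < c)
    (hc1 : c ≤ 1) :
    ∃ q₀ : ℕ, ∀ q : ℕ, q₀ ≤ q → 2 ≤ q ∧ 2 * (q : ℝ) ^ 4 * Real.exp (-(q / (32 * r))) ≤ 1 ∧
      ∃ b m t i : ℕ, 0 < b ∧ (q : ℝ) ^ (2 * k) ≤ q * (b : ℝ) ^ k ∧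
        1 / 2 * (q : ℝ) ^ ((4 : ℝ) - 1 / (k : ℝ)) ≤ m ∧
        (t : ℝ) < (q : ℝ) ^ ((2 : ℝ) - 1 / (k : ℝ)) * Real.logb 2 q ^ 3 + 1 ∧
        (1 - c) ^ i * (q : ℝ) ^ 4 ≤ C * q ^ 2 ∧
        ∀ n : ℕ, q ^ 4 ≤ 2 * n → n ≤ q ^ 4 → m ≤ n ∧
          (((n + 1) ^ (b * k)) ^ i * (C * q ^ 2).choose t) * m ^ t < n ^ t := by
  have hr' : (0:ℝ) < r := by exact_mod_cast hr
  have hk' : (1:ℝ) ≤ k := by exact_mod_cast hk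
  have hC' : (1:ℝ) ≤ C := by exact_mod_cast hC
  -- requirements for large `q`
  have hlog : Filter.Tendsto (fun q : ℕ => Real.logb 2 (q : ℝ)) Filter.atTop Filter.atTop :=
    (Real.tendsto_logb_atTop (by norm_num)).comp tendsto_natCast_atTop_atTop
  have e1 := hlog.eventually_gt_atTop (80 * k / c)
  have e2 := hlog.eventually_ge_atTop (2 * Real.exp 2 * C)
  have e3 : ∀ᶠ q : ℕ in Filter.atTop, 2 * (q : ℝ) ^ 4 * Real.exp (-(q / (32 * r))) ≤ 1 := by
    have h := (Real.tendsto_pow_mul_exp_neg_atTop_nhds_zero 4).comp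
      (Filter.Tendsto.atTop_div_const (show (0:ℝ) < 32 * r by positivity)
        tendsto_natCast_atTop_atTop)
    have h2 := h.eventually_le_const (show (0:ℝ) < 1 / (2 * (32 * r) ^ 4) by positivity)
    filter_upwards [h2] with q hq
    simp only [Function.comp] at hq
    rw [div_pow, le_div_iff₀ (by positivity)] at hq
    calc _ = (q : ℝ) ^ 4 / (32 * r) ^ 4 * Real.exp (-(q / (32 * r))) * (2 * (32 * r) ^ 4) := by
          field_simp
      _ ≤ 1 := hq
  have e4 := Filter.eventually_ge_atTop (2 ^ k)
  have e5 := Filter.eventually_ge_atTop 3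
  obtain ⟨q₀, hq₀⟩ := Filter.eventually_atTop.1 (e1.and (e2.and (e3.and (e4.and e5))))
  refine ⟨q₀, fun q hqq => ?_⟩
  obtain ⟨f1, f2, f3, f4, f5⟩ := hq₀ q hqq
  refine ⟨by omega, f3, ?_⟩
  have hq3 : (3:ℝ) ≤ q := by exact_mod_cast f5
  have hq0 : (0:ℝ) < q := by linarith
  set lam := Real.logb 2 (q : ℝ) with hlam
  have hk0 : (0:ℝ) < k := by linarith
  have hinv : 1 / (k:ℝ) ≤ 1 := by rw [div_le_one hk0]; exact hk'
  set B : ℝ := (q : ℝ) ^ ((2 : ℝ) - 1 / (k : ℝ)) with hB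
  have hB1 : (q:ℝ) ≤ B := by
    calc (q:ℝ) = (q:ℝ) ^ (1:ℝ) := (Real.rpow_one _).symm
      _ ≤ _ := Real.rpow_le_rpow_of_exponent_le (by linarith) (by linarith)
  have hB2 : (q:ℝ) ^ ((4 : ℝ) - 1 / (k : ℝ)) = q ^ 2 * B := by
    rw [hB, ← Real.rpow_natCast, ← Real.rpow_add hq0]; congr 1; push_cast; ring
  have hBk : B * (q:ℝ) ^ (1 / (k:ℝ)) = q ^ 2 := by
    rw [hB, ← Real.rpow_natCast, ← Real.rpow_add hq0]; congr 1; push_cast; ring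
  have hqk : ((q:ℝ) ^ (1 / (k:ℝ))) ^ k = q := by
    rw [← Real.rpow_natCast, ← Real.rpow_mul hq0.le, one_div_mul_cancel hk0.ne', Real.rpow_one]
  have hqk2 : 2 ≤ (q:ℝ) ^ (1 / (k:ℝ)) := by
    refine le_of_pow_le_pow_left₀ (n := k) (by omega) (by positivity) ?_
    rw [hqk]; exact_mod_cast f4
  have hB0 : 0 < B := by linarith
  have hlam1 : 1 ≤ lam := by
    have : (1:ℝ) ≤ 2 * Real.exp 2 * C := by
      have := Real.add_one_le_exp (2:ℝ)
      nlinarith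
    linarith
  have hloglam : Real.log q ≤ lam := by
    rw [hlam, Real.logb, le_div_iff₀ (Real.log_pos (by norm_num))]
    have := Real.log_two_lt_d9
    have h0 : 0 ≤ Real.log q := Real.log_nonneg (by linarith)
    nlinarith
  have hlog1 : 1 ≤ Real.log q := by
    rw [Real.le_log_iff_exp_le hq0]
    have := Real.exp_one_lt_d9
    linarith
  refine ⟨⌈B⌉₊, ⌈1 / 2 * (q ^ 2 * B)⌉₊, ⌈B * lam ^ 3⌉₊, ⌈4 / c * Real.log q⌉₊,
    Nat.ceil_pos.2 hB0, ?_, ?_, Nat.ceil_lt_add_one (by positivity), ?_, ?_⟩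
  · calc (q:ℝ) ^ (2 * k) = (B * (q:ℝ) ^ (1 / (k:ℝ))) ^ k := by rw [hBk, pow_mul]
      _ = q * B ^ k := by rw [mul_pow, hqk, mul_comm]
      _ ≤ _ := by gcongr; exact Nat.le_ceil _
  · rw [hB2]; exact Nat.le_ceil _
  · have h1 : (1 - c) ^ ⌈4 / c * Real.log q⌉₊ ≤ ((q:ℝ) ^ 4)⁻¹ := by
      calc (1 - c) ^ ⌈4 / c * Real.log q⌉₊ ≤ Real.exp (-c) ^ ⌈4 / c * Real.log q⌉₊ := by
            refine pow_le_pow_left₀ (by linarith) ?_ _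
            have := Real.add_one_le_exp (-c)
            linarith
        _ = Real.exp (-(c * ⌈4 / c * Real.log q⌉₊)) := by
            rw [← Real.exp_nat_mul]; congr 1; ring
        _ ≤ Real.exp (-(4 * Real.log q)) := by
            apply Real.exp_le_exp.2
            have := mul_le_mul_of_nonneg_left (Nat.le_ceil (4 / c * Real.log q)) hc.le
            rw [← mul_assoc, mul_div_cancel₀ _ hc.ne'] at this
            linarith
        _ = _ := by
            rw [Real.exp_neg, show (4:ℝ) * Real.log q = ((4:ℕ):ℝ) * Real.log q by norm_num,
              Real.exp_nat_mul, Real.exp_log hq0]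
    calc _ ≤ ((q:ℝ) ^ 4)⁻¹ * (q : ℝ) ^ 4 := by gcongr
      _ = 1 := inv_mul_cancel₀ (by positivity)
      _ ≤ _ := by nlinarith
  · intro n hn1 hn2
    have hn1' : (q:ℝ) ^ 4 ≤ 2 * n := by exact_mod_cast hn1
    have hn2' : (n:ℝ) ≤ q ^ 4 := by exact_mod_cast hn2
    have hm : ((⌈1 / 2 * (q ^ 2 * B)⌉₊ : ℕ) : ℝ) ≤ q ^ 2 * B := by
      have := Nat.ceil_lt_add_one (show 0 ≤ 1 / 2 * ((q:ℝ) ^ 2 * B) by positivity)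
      have : 9 ≤ (q:ℝ) ^ 2 := by nlinarith
      nlinarith
    constructor
    · have : (q:ℝ) ^ 2 * B * 2 ≤ q ^ 4 := by
        calc (q:ℝ) ^ 2 * B * 2 ≤ q ^ 2 * B * (q:ℝ) ^ (1 / (k:ℝ)) := by gcongr
          _ = _ := by rw [mul_assoc, hBk]; ring
      have h2 : ((⌈1 / 2 * (q ^ 2 * B)⌉₊ : ℕ) : ℝ) ≤ n := by linarith
      exact_mod_cast h2
    · have h1 : ((((n + 1) ^ (⌈B⌉₊ * k)) ^ ⌈4 / c * Real.log q⌉₊ : ℕ) : ℝ) ≤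
          Real.exp (80 * k / c * B * lam ^ 2) := by
        have h2 : ((n + 1 : ℕ) : ℝ) ≤ Real.exp (5 * Real.log q) := by
          rw [show (5:ℝ) * Real.log q = ((5:ℕ):ℝ) * Real.log q by norm_num,
              Real.exp_nat_mul, Real.exp_log hq0]
          push_cast
          have : 1 ≤ (q:ℝ) ^ 4 := one_le_pow₀ (by linarith)
          calc (n:ℝ) + 1 ≤ q ^ 4 * 3 := by linarith
            _ ≤ q ^ 4 * q := by gcongr
            _ = _ := by ring
        rw [← pow_mul]
        push_cast at h2 ⊢
        calc ((n:ℝ) + 1) ^ (⌈B⌉₊ * k * ⌈4 / c * Real.log q⌉₊)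
            ≤ Real.exp (5 * Real.log q) ^ (⌈B⌉₊ * k * ⌈4 / c * Real.log q⌉₊) := by gcongr
          _ = Real.exp ((⌈B⌉₊ * k * ⌈4 / c * Real.log q⌉₊) * (5 * Real.log q)) := by
              rw [← Real.exp_nat_mul]; push_cast; rfl
          _ ≤ _ := by
              apply Real.exp_le_exp.2
              have h3 : (⌈B⌉₊ : ℝ) ≤ 2 * B := by
                have := Nat.ceil_lt_add_one hB0.le
                linarith
              have h4 : (⌈4 / c * Real.log q⌉₊ : ℝ) ≤ 8 / c * lam := by
                have h5 := Nat.ceil_lt_add_one (show 0 ≤ 4 / c * Real.log q by positivity)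
                have h6 : 1 ≤ 4 / c * lam := by
                  have : 1 ≤ 4 / c := by rw [le_div_iff₀ hc]; linarith
                  exact one_le_mul_of_one_le_of_one_le this hlam1
                have h7 : 4 / c * Real.log q ≤ 4 / c * lam := by gcongr
                have h8 : 8 / c * lam = 4 / c * lam + 4 / c * lam := by ring
                linarith
              calc (⌈B⌉₊ * k * ⌈4 / c * Real.log q⌉₊ : ℝ) * (5 * Real.log q)
                  ≤ (2 * B * k * (8 / c * lam)) * (5 * lam) := by gcongr
                _ = _ := by ring
      have h2 : (((C * q ^ 2).choose ⌈B * lam ^ 3⌉₊ : ℕ) : ℝ) ≤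
          (C * q ^ 2) ^ ⌈B * lam ^ 3⌉₊ / (⌈B * lam ^ 3⌉₊).factorial := by
        have := Nat.choose_le_pow_div (α := ℝ) ⌈B * lam ^ 3⌉₊ (C * q ^ 2)
        push_cast at this
        exact this
      have hl : 2 * Real.exp 2 * C ≤ lam ^ 3 := by
        have : lam ≤ lam ^ 3 := le_self_pow₀ hlam1 (by norm_num)
        linarith
      have h3 := union_bound (n := n) hq0 hB0 (by linarith) (by linarith) (Nat.cast_nonneg _)
        (Nat.cast_nonneg _) h1 h2 hn1' hm (Nat.le_ceil _) f1 hl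
      exact_mod_cast h3

/-! ### The coloured meeting graph of a linear space without O'Nan configurations -/

section
open Classical
variable {P L : Type*} {r : ℕ}

/-- Two distinct lines share at most one point. -/
def Linear (I : P → L → Prop) : Prop :=
  ∀ p x l l', l ≠ l' → I p l → I p l' → I x l → I x l' → p = x

/-- No four lines meet pairwise with no three of them concurrent (no O'Nan configuration). -/
def OnanFree (I : P → L → Prop) : Prop :=
  ∀ l₁ l₂ l₃ l₄ : L, (∃ p, I p l₁ ∧ I p l₂) → (∃ p, I p l₁ ∧ I p l₃) → (∃ p, I p l₁ ∧ I p l₄) →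
    (∃ p, I p l₂ ∧ I p l₃) → (∃ p, I p l₂ ∧ I p l₄) → (∃ p, I p l₃ ∧ I p l₄) →
    ∃ p, (I p l₁ ∧ I p l₂ ∧ I p l₃) ∨ (I p l₁ ∧ I p l₂ ∧ I p l₄) ∨
      (I p l₁ ∧ I p l₃ ∧ I p l₄) ∨ (I p l₂ ∧ I p l₃ ∧ I p l₄)

/-- The graph on the lines in which two lines are adjacent when they meet in a point at which they
have different colours. -/
def meetGraph (I : P → L → Prop) (χ : P → L → Fin r) : SimpleGraph L where
  Adj l l' := l ≠ l' ∧ ∃ p, I p l ∧ I p l' ∧ χ p l ≠ χ p l'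
  symm := ⟨fun _ _ ⟨h, p, h1, h2, h3⟩ => ⟨h.symm, p, h2, h1, h3.symm⟩⟩
  loopless := ⟨fun _ h => h.1 rfl⟩

/-- In a clique of size `r + 2` all lines but one go through a common point, so that two of them
have the same colour there. -/
theorem not_containsCopy_top {I : P → L → Prop} (hr : 2 ≤ r) (hI : Linear I) (hO : OnanFree I)
    (χ : P → L → Fin r) :
    ¬ ContainsCopy (⊤ : SimpleGraph (Fin (r + 2))) (meetGraph I χ) := by
  rintro ⟨f, hf, hadj⟩
  have hadj' : ∀ a b, a ≠ b → ∃ p, I p (f a) ∧ I p (f b) ∧ χ p (f a) ≠ χ p (f b) :=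
    fun a b hab => (hadj (a := a) (b := b) (by simpa using hab)).2
  have hmeet : ∀ a b, a ≠ b → ∃ p, I p (f a) ∧ I p (f b) := fun a b hab =>
    let ⟨p, h1, h2, _⟩ := hadj' a b hab
    ⟨p, h1, h2⟩
  have hquad : ∀ a b c d, a ≠ b → a ≠ c → a ≠ d → b ≠ c → b ≠ d → c ≠ d → ∃ p,
      (I p (f a) ∧ I p (f b) ∧ I p (f c)) ∨ (I p (f a) ∧ I p (f b) ∧ I p (f d)) ∨
      (I p (f a) ∧ I p (f c) ∧ I p (f d)) ∨ (I p (f b) ∧ I p (f c) ∧ I p (f d)) :=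
    fun a b c d h1 h2 h3 h4 h5 h6 => hO _ _ _ _ (hmeet _ _ h1) (hmeet _ _ h2) (hmeet _ _ h3)
      (hmeet _ _ h4) (hmeet _ _ h5) (hmeet _ _ h6)
  -- three of the lines are concurrent
  obtain ⟨p, a, b, c, hab, hac, hbc, ha, hb, hc⟩ : ∃ p, ∃ a b c : Fin (r + 2),
      a ≠ b ∧ a ≠ c ∧ b ≠ c ∧ I p (f a) ∧ I p (f b) ∧ I p (f c) := by
    have hne : ∀ i j : Fin 4, i ≠ j →
        Fin.castLE (show 4 ≤ r + 2 by omega) i ≠ Fin.castLE (show 4 ≤ r + 2 by omega) j :=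
      fun i j h h' => h (Fin.castLE_injective _ h')
    obtain ⟨p, h⟩ := hquad _ _ _ _ (hne 0 1 (by decide)) (hne 0 2 (by decide))
      (hne 0 3 (by decide)) (hne 1 2 (by decide)) (hne 1 3 (by decide)) (hne 2 3 (by decide))
    rcases h with h | h | h | h
    · exact ⟨p, _, _, _, hne 0 1 (by decide), hne 0 2 (by decide), hne 1 2 (by decide), h⟩
    · exact ⟨p, _, _, _, hne 0 1 (by decide), hne 0 3 (by decide), hne 1 3 (by decide), h⟩
    · exact ⟨p, _, _, _, hne 0 2 (by decide), hne 0 3 (by decide), hne 2 3 (by decide), h⟩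
    · exact ⟨p, _, _, _, hne 1 2 (by decide), hne 1 3 (by decide), hne 2 3 (by decide), h⟩
  -- at most one of the lines misses this point
  have huniq : ∀ d e, ¬ I p (f d) → ¬ I p (f e) → d = e := by
    intro d e hd he
    by_contra hde
    obtain ⟨x, hxd, hxe⟩ := hmeet d e hde
    have hxp : x ≠ p := by rintro rfl; exact hd hxd
    have hor : ∀ a b, a ≠ b → I p (f a) → I p (f b) → I x (f a) ∨ I x (f b) := by
      intro a b hab ha hb
      by_contra hcon
      push Not at hcon
      have had : a ≠ d := by rintro rfl; exact hd ha
      have hae : a ≠ e := by rintro rfl; exact he ha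
      have hbd : b ≠ d := by rintro rfl; exact hd hb
      have hbe : b ≠ e := by rintro rfl; exact he hb
      obtain ⟨y, h | h | h | h⟩ := hquad a b d e hab had hae hbd hbe hde
      · rw [hI y p _ _ (hf.ne hab) h.1 h.2.1 ha hb] at h
        exact hd h.2.2
      · rw [hI y p _ _ (hf.ne hab) h.1 h.2.1 ha hb] at h
        exact he h.2.2
      · rw [hI y x _ _ (hf.ne hde) h.2.1 h.2.2 hxd hxe] at h
        exact hcon.1 h.1
      · rw [hI y x _ _ (hf.ne hde) h.2.1 h.2.2 hxd hxe] at h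
        exact hcon.2 h.1
    have hnot : ∀ a b, a ≠ b → I p (f a) → I p (f b) → ¬ (I x (f a) ∧ I x (f b)) :=
      fun a b hab ha hb h => hxp (hI x p _ _ (hf.ne hab) h.1 h.2 ha hb)
    have := hor a b hab ha hb
    have := hor a c hac ha hc
    have := hor b c hbc hb hc
    have := hnot a b hab ha hb
    have := hnot a c hac ha hc
    have := hnot b c hbc hb hc
    tauto
  have h1 : (Finset.univ.filter fun d => ¬ I p (f d)).card ≤ 1 :=
    Finset.card_le_one.2 fun d hd e he =>
      huniq d e (Finset.mem_filter.1 hd).2 (Finset.mem_filter.1 he).2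
  have h2 := Finset.card_filter_add_card_filter_not (s := (Finset.univ : Finset (Fin (r + 2))))
    (fun d => I p (f d))
  rw [Finset.card_univ, Fintype.card_fin] at h2
  have h3 : (Finset.univ.filter fun d => I p (f d)).card ≤ (Finset.univ : Finset (Fin r)).card := by
    refine Finset.card_le_card_of_injOn (fun d => χ p (f d)) (fun _ _ => Finset.mem_univ _) ?_
    intro d hd e he hde
    by_contra hne
    obtain ⟨y, hy1, hy2, hy3⟩ := hadj' d e hne
    rw [hI y p _ _ (hf.ne hne) hy1 hy2 (Finset.mem_filter.1 hd).2 (Finset.mem_filter.1 he).2] at hy3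
    exact hy3 hde
  rw [Finset.card_univ, Fintype.card_fin] at h3
  omega

lemma RichFree.mono {I : P → L → Prop} {χ : P → L → Fin r} {sz : Fin r → ℕ} {T T' : Finset L}
    (h : RichFree I χ sz T) (hT : T' ⊆ T) : RichFree I χ sz T' := by
  intro p
  obtain ⟨i, hi⟩ := h p
  refine ⟨i, lt_of_le_of_lt (Finset.card_le_card ?_) hi⟩
  exact Finset.filter_subset_filter _ (Finset.filter_subset_filter _ hT)

/-- A set of lines which is rich at some point contains a complete multipartite graph. -/
lemma richFree_of_not_containsCopy {I : P → L → Prop} {χ : P → L → Fin r} {sz : Fin r → ℕ} {m : ℕ}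
    (e : Fin m ↪ L) (S : Finset (Fin m))
    (h : ¬ ContainsCopy (SimpleGraph.completeMultipartiteGraph fun i => Fin (sz i))
      (((meetGraph I χ).comap e).induce (S : Set (Fin m)))) :
    RichFree I χ sz (S.map e) := by
  by_contra hcon
  unfold RichFree at hcon
  push Not at hcon
  obtain ⟨p, hp⟩ := hcon
  refine h ?_
  have hg : ∀ i, ∃ g : Fin (sz i) → Fin m, Function.Injective g ∧ ∀ j, g j ∈ S ∧
      I p (e (g j)) ∧ χ p (e (g j)) = i := by
    intro i
    have hcard : sz i ≤ (S.filter fun s => I p (e s) ∧ χ p (e s) = i).card := by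
      refine (hp i).trans ?_
      rw [← Finset.card_map e]
      refine Finset.card_le_card fun l hl => ?_
      simp only [cls, pencil, Finset.mem_filter, Finset.mem_map] at hl ⊢
      obtain ⟨⟨⟨s, hs, rfl⟩, h1⟩, h2⟩ := hl
      exact ⟨s, ⟨hs, h1, h2⟩, rfl⟩
    refine ⟨fun j => ((Finset.equivFin _).symm (Fin.castLE hcard j)).1, ?_, fun j => ?_⟩
    · intro j j' hjj
      exact Fin.castLE_injective _ ((Finset.equivFin _).symm.injective (Subtype.ext hjj))
    · exact Finset.mem_filter.1 ((Finset.equivFin _).symm (Fin.castLE hcard j)).2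
  choose g hg1 hg2 using hg
  have hcol : ∀ x : (i : Fin r) × Fin (sz i), χ p (e (g x.1 x.2)) = x.1 :=
    fun x => (hg2 x.1 x.2).2.2
  refine ⟨fun x => ⟨g x.1 x.2, (hg2 x.1 x.2).1⟩, ?_, ?_⟩
  · rintro ⟨i, j⟩ ⟨i', j'⟩ hxy
    have hxy' : g i j = g i' j' := congrArg Subtype.val hxy
    have hii : i = i' := by
      rw [← (hg2 i j).2.2, ← (hg2 i' j').2.2, hxy']
    subst hii
    rw [hg1 i hxy']
  · intro x y hxy
    have hne : x.1 ≠ y.1 := hxy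
    have hne' : χ p (e (g x.1 x.2)) ≠ χ p (e (g y.1 y.2)) := by rwa [hcol, hcol]
    refine ⟨fun heq => hne' (congrArg (χ p) heq), p, (hg2 x.1 x.2).2.1, (hg2 y.1 y.2).2.1, hne'⟩

lemma fIndepNum_lt {I : P → L → Prop} {χ : P → L → Fin r} {sz : Fin r → ℕ} {m t : ℕ}
    (hr : 0 < r) (hsz : ∀ i, 0 < sz i) (e : Fin m ↪ L)
    (h : ∀ S : Finset (Fin m), S.card = t → ¬ RichFree I χ sz (S.map e)) :
    fIndepNum (SimpleGraph.completeMultipartiteGraph fun i => Fin (sz i))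
      ((meetGraph I χ).comap e) < t := by
  set A := {k | ∃ S : Finset (Fin m), S.card = k ∧
    ¬ ContainsCopy (SimpleGraph.completeMultipartiteGraph fun i => Fin (sz i))
      (((meetGraph I χ).comap e).induce (S : Set (Fin m)))} with hA
  have hne : A.Nonempty := by
    refine ⟨0, ∅, rfl, ?_⟩
    rintro ⟨f, -⟩
    have := (f ⟨⟨0, hr⟩, ⟨0, hsz _⟩⟩).2
    simp at this
  have hbdd : BddAbove A := by
    refine ⟨m, ?_⟩
    rintro k ⟨S, rfl, -⟩
    simpa using Finset.card_le_univ S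
  obtain ⟨S, hS, hSc⟩ := Nat.sSup_mem hne hbdd
  change sSup A < t
  rw [← hS]
  by_contra hcon
  push Not at hcon
  obtain ⟨S', hS', hc⟩ := Finset.exists_subset_card_eq hcon
  exact h S' hc ((richFree_of_not_containsCopy e S hSc).mono (Finset.map_subset_map.2 hS'))
end

/-! ### The Hermitian unital -/

section
variable {K : Type*} [Field K]

/-- The algebraic core of the absence of O'Nan configurations. The points `u_j = (x_j, y_j)` and the
points dividing the sides of the triangle `u₁ u₂ u₃` in the ratios `t_j` are all isotropic for the
Hermitian form `H (u, v) = x_u * conj x_v - y_u - conj y_v`, and the ratios satisfy the relation of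
Menelaus. Then the Gram determinant of the triangle vanishes, so that the triangle is degenerate.
Here `X_j`, `Y_j`, `T_j` are the conjugates of `x_j`, `y_j`, `t_j`. -/
lemma onan_core {x₁ x₂ x₃ y₁ y₂ y₃ t₁ t₂ t₃ X₁ X₂ X₃ Y₁ Y₂ Y₃ T₁ T₂ T₃ : K}
    (h₁ : x₁ * X₁ = y₁ + Y₁) (h₂ : x₂ * X₂ = y₂ + Y₂) (h₃ : x₃ * X₃ = y₃ + Y₃)
    (w₁ : ((1 - t₁) * x₂ + t₁ * x₃) * ((1 - T₁) * X₂ + T₁ * X₃) =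
      ((1 - t₁) * y₂ + t₁ * y₃) + ((1 - T₁) * Y₂ + T₁ * Y₃))
    (w₂ : ((1 - t₂) * x₃ + t₂ * x₁) * ((1 - T₂) * X₃ + T₂ * X₁) =
      ((1 - t₂) * y₃ + t₂ * y₁) + ((1 - T₂) * Y₃ + T₂ * Y₁))
    (w₃ : ((1 - t₃) * x₁ + t₃ * x₂) * ((1 - T₃) * X₁ + T₃ * X₂) =
      ((1 - t₃) * y₁ + t₃ * y₂) + ((1 - T₃) * Y₁ + T₃ * Y₂))
    (hm : (1 - t₁) * (1 - t₂) * (1 - t₃) + t₁ * t₂ * t₃ = 0)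
    (hM : (1 - T₁) * (1 - T₂) * (1 - T₃) + T₁ * T₂ * T₃ = 0)
    (ht : t₁ * t₂ * t₃ ≠ 0) (hT : T₁ * T₂ * T₃ ≠ 0) :
    (x₁ * (y₂ - y₃) - y₁ * (x₂ - x₃) + (x₂ * y₃ - x₃ * y₂)) *
      (X₁ * (Y₂ - Y₃) - Y₁ * (X₂ - X₃) + (X₂ * Y₃ - X₃ * Y₂)) = 0 := by
  obtain ⟨g12, e12⟩ : ∃ g, g = x₁ * X₂ - y₁ - Y₂ := ⟨_, rfl⟩
  obtain ⟨g21, e21⟩ : ∃ g, g = x₂ * X₁ - y₂ - Y₁ := ⟨_, rfl⟩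
  obtain ⟨g13, e13⟩ : ∃ g, g = x₁ * X₃ - y₁ - Y₃ := ⟨_, rfl⟩
  obtain ⟨g31, e31⟩ : ∃ g, g = x₃ * X₁ - y₃ - Y₁ := ⟨_, rfl⟩
  obtain ⟨g23, e23⟩ : ∃ g, g = x₂ * X₃ - y₂ - Y₃ := ⟨_, rfl⟩
  obtain ⟨g32, e32⟩ : ∃ g, g = x₃ * X₂ - y₃ - Y₂ := ⟨_, rfl⟩
  -- isotropy of the division points
  have a₁ : (1 - t₁) * T₁ * g23 + t₁ * (1 - T₁) * g32 = 0 := by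
    rw [e23, e32]
    linear_combination w₁ - (1 - t₁) * (1 - T₁) * h₂ - t₁ * T₁ * h₃
  have a₂ : (1 - t₂) * T₂ * g31 + t₂ * (1 - T₂) * g13 = 0 := by
    rw [e31, e13]
    linear_combination w₂ - (1 - t₂) * (1 - T₂) * h₃ - t₂ * T₂ * h₁
  have a₃ : (1 - t₃) * T₃ * g12 + t₃ * (1 - T₃) * g21 = 0 := by
    rw [e12, e21]
    linear_combination w₃ - (1 - t₃) * (1 - T₃) * h₁ - t₃ * T₃ * h₂
  have b : ((1 - t₁) * T₁ * g23) * ((1 - t₂) * T₂ * g31) * ((1 - t₃) * T₃ * g12) =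
      -((t₁ * (1 - T₁) * g32) * (t₂ * (1 - T₂) * g13) * (t₃ * (1 - T₃) * g21)) := by
    rw [eq_neg_of_add_eq_zero_left a₁, eq_neg_of_add_eq_zero_left a₂,
      eq_neg_of_add_eq_zero_left a₃]
    ring
  have c : (t₁ * t₂ * t₃) * (T₁ * T₂ * T₃) * (g12 * g23 * g31 + g13 * g21 * g32) = 0 := by
    linear_combination -b + (T₁ * T₂ * T₃) * (g12 * g23 * g31) * hm +
      (t₁ * t₂ * t₃) * (g13 * g21 * g32) * hM
  -- the Gram determinant
  have d : g12 * g23 * g31 + g13 * g21 * g32 = 0 :=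
    (mul_eq_zero.1 c).resolve_left (mul_ne_zero ht hT)
  have g : (x₁ * (y₂ - y₃) - y₁ * (x₂ - x₃) + (x₂ * y₃ - x₃ * y₂)) *
      (X₁ * (Y₂ - Y₃) - Y₁ * (X₂ - X₃) + (X₂ * Y₃ - X₃ * Y₂)) =
      -(g12 * g23 * g31 + g13 * g21 * g32 +
        (x₁ * X₁ - y₁ - Y₁) * (x₂ * X₂ - y₂ - Y₂) * (x₃ * X₃ - y₃ - Y₃)
        - (x₁ * X₁ - y₁ - Y₁) * g23 * g32 - (x₂ * X₂ - y₂ - Y₂) * g13 * g31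
        - (x₃ * X₃ - y₃ - Y₃) * g12 * g21) := by
    rw [e12, e13, e21, e23, e31, e32]; ring
  rw [g, d, h₁, h₂, h₃]
  ring

/-- The affine points of the Hermitian curve `x * conj x = y + conj y`. -/
abbrev UPoint (σ : K →+* K) : Type _ := {v : K × K // v.1 * σ v.1 = v.2 + σ v.2}

/-- The lines `y = a * x + b` which are not tangent to the Hermitian curve, given by `(a, b)`. -/
abbrev ULine (σ : K →+* K) : Type _ := {v : K × K // v.1 * σ v.1 + (v.2 + σ v.2) ≠ 0}

/-- Incidence between points and lines of the Hermitian unital. -/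
def UInc (σ : K →+* K) (p : UPoint σ) (l : ULine σ) : Prop := p.1.2 = l.1.1 * p.1.1 + l.1.2

variable {σ : K →+* K}

lemma uInc_x_ne {p p' : UPoint σ} {l : ULine σ} (hp : UInc σ p l) (hp' : UInc σ p' l)
    (hne : p ≠ p') : p.1.1 ≠ p'.1.1 := by
  intro h
  refine hne (Subtype.ext (Prod.ext h ?_))
  rw [hp, hp', h]

lemma uInc_linear : Linear (UInc σ) := by
  intro p p' l l' hne h1 h2 h3 h4
  by_contra hpp
  have hx := uInc_x_ne h1 h3 hpp
  unfold UInc at h1 h2 h3 h4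
  have ha : l.1.1 = l'.1.1 := by
    have : (l.1.1 - l'.1.1) * (p.1.1 - p'.1.1) = 0 := by
      linear_combination -h1 + h2 + h3 - h4
    rcases mul_eq_zero.1 this with h | h
    · exact sub_eq_zero.1 h
    · exact absurd (sub_eq_zero.1 h) hx
  refine hne (Subtype.ext (Prod.ext ha ?_))
  rw [ha] at h1
  linear_combination h2 - h1

/-- A further point of a line through `p` and `p'` divides them in some ratio. -/
lemma uInc_ratio {p p' w : UPoint σ} {l : ULine σ} (hp : UInc σ p l) (hp' : UInc σ p' l)
    (hw : UInc σ w l) (hne : p ≠ p') (hwp : w ≠ p) :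
    ∃ t, t ≠ 0 ∧ w.1.1 = (1 - t) * p.1.1 + t * p'.1.1 ∧ w.1.2 = (1 - t) * p.1.2 + t * p'.1.2 := by
  have hx : p'.1.1 - p.1.1 ≠ 0 := sub_ne_zero.2 (uInc_x_ne hp hp' hne).symm
  have hx' : w.1.1 - p.1.1 ≠ 0 := sub_ne_zero.2 (uInc_x_ne hw hp hwp)
  have h : (w.1.1 - p.1.1) / (p'.1.1 - p.1.1) * (p'.1.1 - p.1.1) = w.1.1 - p.1.1 :=
    div_mul_cancel₀ _ hx
  generalize ht : (w.1.1 - p.1.1) / (p'.1.1 - p.1.1) = t at h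
  refine ⟨t, ?_, ?_, ?_⟩
  · rw [← ht]; exact div_ne_zero hx' hx
  · linear_combination -h
  · unfold UInc at hp hp' hw
    rw [hp, hp', hw]
    linear_combination (-l.1.1) * h

theorem uInc_onanFree : OnanFree (UInc σ) := by
  rintro l₁ l₂ l₃ l₄ ⟨u₃, c1, c2⟩ ⟨u₂, b1, b3⟩ ⟨w₁, d1, d4⟩ ⟨u₁, a2, a3⟩ ⟨w₂, e2, e4⟩ ⟨w₃, f3, f4⟩
  by_contra hcon
  push Not at hcon
  -- otherwise all the six points are distinct
  have n1 : ¬ UInc σ u₁ l₁ := fun h => (hcon u₁).1 h a2 a3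
  have n41 : ¬ UInc σ u₁ l₄ := fun h => (hcon u₁).2.2.2 a2 a3 h
  have n42 : ¬ UInc σ u₂ l₄ := fun h => (hcon u₂).2.2.1 b1 b3 h
  have n43 : ¬ UInc σ u₃ l₄ := fun h => (hcon u₃).2.1 c1 c2 h
  have u12 : u₁ ≠ u₂ := by rintro rfl; exact n1 b1
  have u31 : u₃ ≠ u₁ := by rintro rfl; exact n1 c1
  have u23 : u₂ ≠ u₃ := by rintro rfl; exact (hcon u₂).1 b1 c2 b3
  obtain ⟨t₁, ht₁, hx₁, hy₁⟩ := uInc_ratio b1 c1 d1 u23 (by rintro rfl; exact n42 d4)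
  obtain ⟨t₂, ht₂, hx₂, hy₂⟩ := uInc_ratio c2 a2 e2 u31 (by rintro rfl; exact n43 e4)
  obtain ⟨t₃, ht₃, hx₃, hy₃⟩ := uInc_ratio a3 b3 f3 u12 (by rintro rfl; exact n41 f4)
  have hw₁ := w₁.2
  have hw₂ := w₂.2
  have hw₃ := w₃.2
  rw [hx₁, hy₁] at hw₁
  rw [hx₂, hy₂] at hw₂
  rw [hx₃, hy₃] at hw₃
  simp only [map_add, map_mul, map_sub, map_one] at hw₁ hw₂ hw₃
  have hm : (1 - t₁) * (1 - t₂) * (1 - t₃) + t₁ * t₂ * t₃ = 0 := by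
    unfold UInc at d4 e4 f4 n41 n42 n43
    rw [hx₁, hy₁] at d4
    rw [hx₂, hy₂] at e4
    rw [hx₃, hy₃] at f4
    obtain ⟨z₁, hz₁⟩ : ∃ z, z = u₁.1.2 - (l₄.1.1 * u₁.1.1 + l₄.1.2) := ⟨_, rfl⟩
    obtain ⟨z₂, hz₂⟩ : ∃ z, z = u₂.1.2 - (l₄.1.1 * u₂.1.1 + l₄.1.2) := ⟨_, rfl⟩
    obtain ⟨z₃, hz₃⟩ : ∃ z, z = u₃.1.2 - (l₄.1.1 * u₃.1.1 + l₄.1.2) := ⟨_, rfl⟩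
    have k₁ : (1 - t₁) * z₂ = -(t₁ * z₃) := by rw [hz₂, hz₃]; linear_combination d4
    have k₂ : (1 - t₂) * z₃ = -(t₂ * z₁) := by rw [hz₃, hz₁]; linear_combination e4
    have k₃ : (1 - t₃) * z₁ = -(t₃ * z₂) := by rw [hz₁, hz₂]; linear_combination f4
    have hz : z₁ * z₂ * z₃ ≠ 0 := by
      rw [hz₁, hz₂, hz₃]
      exact mul_ne_zero (mul_ne_zero (sub_ne_zero.2 n41) (sub_ne_zero.2 n42)) (sub_ne_zero.2 n43)
    have : ((1 - t₁) * z₂) * ((1 - t₂) * z₃) * ((1 - t₃) * z₁) =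
        -(t₁ * z₃) * -(t₂ * z₁) * -(t₃ * z₂) := by rw [k₁, k₂, k₃]
    refine (mul_eq_zero.1 (?_ : (z₁ * z₂ * z₃) * _ = 0)).resolve_left hz
    linear_combination this
  have hM : (1 - σ t₁) * (1 - σ t₂) * (1 - σ t₃) + σ t₁ * σ t₂ * σ t₃ = 0 := by
    have := congrArg σ hm
    simpa using this
  have hτ : t₁ * t₂ * t₃ ≠ 0 := mul_ne_zero (mul_ne_zero ht₁ ht₂) ht₃
  have hT : σ t₁ * σ t₂ * σ t₃ ≠ 0 := by
    rw [← map_mul, ← map_mul]; exact (map_ne_zero σ).2 hτ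
  have hD := onan_core u₁.2 u₂.2 u₃.2 hw₁ hw₂ hw₃ hm hM hτ hT
  have hD' : u₁.1.1 * (u₂.1.2 - u₃.1.2) - u₁.1.2 * (u₂.1.1 - u₃.1.1) +
      (u₂.1.1 * u₃.1.2 - u₃.1.1 * u₂.1.2) = 0 := by
    rcases mul_eq_zero.1 hD with h | h
    · exact h
    · refine (map_eq_zero σ).1 ?_
      simpa using h
  have hx := sub_ne_zero.2 (uInc_x_ne b1 c1 u23)
  unfold UInc at n1 b1 c1
  refine (mul_ne_zero (sub_ne_zero.2 n1) hx) ?_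
  rw [b1, c1] at hD'
  linear_combination -hD'
end

section
open Classical
variable {K : Type*} [Field K] [Fintype K] {q : ℕ}

lemma card_pow_eq_le {n : ℕ} (hn : 0 < n) (c : K) :
    (Finset.univ.filter fun x : K => x ^ n = c).card ≤ n := by
  refine le_trans ?_ (Polynomial.card_nthRoots n c)
  refine le_trans (Finset.card_le_card ?_) (Multiset.toFinset_card_le _)
  intro x hx
  rw [Multiset.mem_toFinset, Polynomial.mem_nthRoots hn]
  exact (Finset.mem_filter.1 hx).2

lemma card_trace_eq_le (hq : 1 < q) (c : K) :
    (Finset.univ.filter fun y : K => y + y ^ q = c).card ≤ q := by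
  have hdeg : (Polynomial.X ^ q + (Polynomial.X - Polynomial.C c) : Polynomial K).natDegree = q := by
    rw [Polynomial.natDegree_add_eq_left_of_natDegree_lt] <;>
      simp [hq]
  have hne : (Polynomial.X ^ q + (Polynomial.X - Polynomial.C c) : Polynomial K) ≠ 0 := by
    intro h
    rw [h] at hdeg
    simp at hdeg
    omega
  calc _ ≤ (Polynomial.X ^ q + (Polynomial.X - Polynomial.C c) : Polynomial K).roots.toFinset.card := by
        refine Finset.card_le_card fun y hy => ?_
        rw [Multiset.mem_toFinset, Polynomial.mem_roots hne]
        have := (Finset.mem_filter.1 hy).2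
        simp only [Polynomial.IsRoot, Polynomial.eval_add, Polynomial.eval_pow, Polynomial.eval_X,
          Polynomial.eval_sub, Polynomial.eval_C]
        linear_combination this
    _ ≤ _ := Multiset.toFinset_card_le _
    _ ≤ _ := Polynomial.card_roots' _
    _ = q := hdeg

/-- The norm map `x ↦ x ^ (q + 1)` takes each nonzero value of the subfield of order `q` exactly
`q + 1` times. -/
lemma card_norm_eq (hq : 1 < q) (hK : Fintype.card K = q ^ 2) {c : K} (hc : c ≠ 0)
    (hcq : c ^ q = c) : (Finset.univ.filter fun x : K => x ^ (q + 1) = c).card = q + 1 := by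
  refine le_antisymm (card_pow_eq_le (by omega) c) ?_
  by_contra hlt
  push Not at hlt
  set U := Finset.univ.filter fun d : K => d ^ (q - 1) = 1 with hU
  have hmaps : ∀ x ∈ (Finset.univ.erase (0:K)), x ^ (q + 1) ∈ U := by
    intro x hx
    rw [hU, Finset.mem_filter]
    refine ⟨Finset.mem_univ _, ?_⟩
    rw [← pow_mul]
    have : (q + 1) * (q - 1) = Fintype.card K - 1 := by
      rw [hK]
      obtain ⟨j, rfl⟩ : ∃ j, q = j + 1 := ⟨q - 1, by omega⟩
      simp only [Nat.add_sub_cancel]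
      have : (j + 1) ^ 2 = (j + 1 + 1) * j + 1 := by ring
      omega
    rw [this]
    exact FiniteField.pow_card_sub_one_eq_one x (Finset.ne_of_mem_erase hx)
  have hcU : c ∈ U := by
    rw [hU, Finset.mem_filter]
    refine ⟨Finset.mem_univ _, mul_right_cancel₀ hc ?_⟩
    rw [← pow_succ, Nat.sub_add_cancel hq.le, hcq, one_mul]
  have h1 := Finset.card_eq_sum_card_fiberwise hmaps
  have h2 : ∑ d ∈ U, ((Finset.univ.erase (0:K)).filter fun x => x ^ (q + 1) = d).card <
      ∑ d ∈ U, (q + 1) := by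
    refine Finset.sum_lt_sum (fun d _ => ?_) ⟨c, hcU, ?_⟩
    · exact (Finset.card_le_card (Finset.filter_subset_filter _ (Finset.subset_univ _))).trans
        (card_pow_eq_le (by omega) d)
    · exact lt_of_le_of_lt
        (Finset.card_le_card (Finset.filter_subset_filter _ (Finset.subset_univ _))) hlt
  rw [← h1, Finset.sum_const, Finset.card_erase_of_mem (Finset.mem_univ _), Finset.card_univ, hK,
    smul_eq_mul] at h2
  have h3 : U.card ≤ q - 1 := card_pow_eq_le (by omega) 1
  have h4 := Nat.mul_le_mul_right (q + 1) h3
  obtain ⟨j, rfl⟩ : ∃ j, q = j + 1 := ⟨q - 1, by omega⟩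
  simp only [Nat.add_sub_cancel] at h4
  have : (j + 1) ^ 2 = j * (j + 1 + 1) + 1 := by ring
  omega

lemma card_pairs_le {K : Type*} [Fintype K] {A : K × K → Prop} {n : ℕ}
    (h : ∀ x, (Finset.univ.filter fun y : K => A (x, y)).card ≤ n) :
    (Finset.univ.filter A).card ≤ n * Fintype.card K := by
  have := Finset.card_le_mul_card_image_of_maps_to (s := Finset.univ.filter A)
    (t := (Finset.univ : Finset K)) (f := Prod.fst) (fun _ _ => Finset.mem_univ _) n ?_
  · rwa [Finset.card_univ] at this
  · intro x _
    refine le_trans (Finset.card_le_card_of_injOn Prod.snd ?_ ?_) (h x)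
    · rintro ⟨x', y⟩ hxy
      have h1 := (Finset.mem_filter.1 (Finset.mem_filter.1 hxy).1).2
      have h2 : x' = x := (Finset.mem_filter.1 hxy).2
      subst h2
      exact Finset.mem_filter.2 ⟨Finset.mem_univ _, h1⟩
    · rintro ⟨x', y⟩ hxy ⟨x'', y'⟩ hxy' hyy
      have h1 : x' = x := (Finset.mem_filter.1 hxy).2
      have h2 : x'' = x := (Finset.mem_filter.1 hxy').2
      exact Prod.ext (h1.trans h2.symm) hyy

/-- A nontangent line meets the Hermitian curve in `q + 1` points: its points correspond to the
solutions of `x ^ (q + 1) = c` by a translation of the first coordinate. -/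
lemma card_uInc {σ : K →+* K} (hσ : ∀ x, σ x = x ^ q) (hσσ : ∀ x, σ (σ x) = x) (hq : 1 < q)
    (hK : Fintype.card K = q ^ 2) (l : ULine σ) :
    (Finset.univ.filter fun p : UPoint σ => UInc σ p l).card = q + 1 := by
  obtain ⟨⟨a, b⟩, hc⟩ := l
  change a * σ a + (b + σ b) ≠ 0 at hc
  have hcσ : (a * σ a + (b + σ b)) ^ q = a * σ a + (b + σ b) := by
    rw [← hσ]
    simp only [map_add, map_mul, hσσ]
    ring
  rw [← card_norm_eq hq hK hc hcσ]
  refine Finset.card_bij' (fun p _ => p.1.1 - σ a)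
    (fun z hz => ⟨(z + σ a, a * (z + σ a) + b), ?_⟩) ?_ ?_ ?_ ?_
  · have hz' := (Finset.mem_filter.1 hz).2
    rw [pow_succ, ← hσ] at hz'
    simp only [map_add, map_mul, hσσ]
    linear_combination hz'
  · rintro ⟨⟨x, y⟩, hxy⟩ hp
    have hp' : y = a * x + b := (Finset.mem_filter.1 hp).2
    refine Finset.mem_filter.2 ⟨Finset.mem_univ _, ?_⟩
    change x * σ x = y + σ y at hxy
    change (x - σ a) ^ (q + 1) = _
    rw [pow_succ, ← hσ]
    rw [hp'] at hxy
    simp only [map_add, map_mul, map_sub, hσσ] at hxy ⊢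
    linear_combination hxy
  · intro z hz
    exact Finset.mem_filter.2 ⟨Finset.mem_univ _, rfl⟩
  · rintro ⟨⟨x, y⟩, hxy⟩ hp
    have hp' : y = a * x + b := (Finset.mem_filter.1 hp).2
    refine Subtype.ext (Prod.ext ?_ ?_)
    · simp
    · simp [hp']
  · intro z hz
    simp

/-- The incidence structure of the nontangent, nonvertical lines and the affine points of the
Hermitian curve over the field of order `q ^ 2`. -/
theorem unital (q : ℕ) (hq : q.Prime) : ∃ (P L : Type) (_ : Fintype P) (_ : Fintype L)
    (I : P → L → Prop), Fintype.card P ≤ q ^ 3 ∧ q ^ 4 ≤ 2 * Fintype.card L ∧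
      Fintype.card L ≤ q ^ 4 ∧ (∀ l, (Finset.univ.filter fun p => I p l).card = q + 1) ∧
      Linear I ∧ OnanFree I := by
  have : Fact q.Prime := ⟨hq⟩
  let K := GaloisField q 2
  have : Fintype K := Fintype.ofFinite K
  have hK : Fintype.card K = q ^ 2 := by
    rw [← Nat.card_eq_fintype_card]
    exact GaloisField.card q 2 (by norm_num)
  let σ : K →+* K := frobenius K q
  have hσ : ∀ x, σ x = x ^ q := fun x => frobenius_def q x
  have hσσ : ∀ x, σ (σ x) = x := by
    intro x
    rw [hσ, hσ, ← pow_mul, ← sq, ← hK]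
    exact FiniteField.pow_card x
  have hq1 : 1 < q := hq.one_lt
  refine ⟨UPoint σ, ULine σ, inferInstance, inferInstance, UInc σ, ?_, ?_, ?_,
    card_uInc hσ hσσ hq1 hK, uInc_linear, uInc_onanFree⟩
  · rw [Fintype.card_subtype]
    refine (card_pairs_le (n := q) fun x => ?_).trans (by rw [hK]; apply le_of_eq; ring)
    refine le_trans (Finset.card_le_card fun y hy => ?_) (card_trace_eq_le hq1 (x * σ x))
    have := (Finset.mem_filter.1 hy).2
    refine Finset.mem_filter.2 ⟨Finset.mem_univ _, ?_⟩
    rw [← hσ]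
    exact this.symm
  · have h1 : (Finset.univ.filter fun v : K × K => v.1 * σ v.1 + (v.2 + σ v.2) = 0).card ≤ q ^ 3 := by
      refine (card_pairs_le (n := q) fun x => ?_).trans (by rw [hK]; apply le_of_eq; ring)
      refine le_trans (Finset.card_le_card fun y hy => ?_) (card_trace_eq_le hq1 (-(x * σ x)))
      have := (Finset.mem_filter.1 hy).2
      refine Finset.mem_filter.2 ⟨Finset.mem_univ _, ?_⟩
      rw [← hσ]
      exact eq_neg_of_add_eq_zero_right this
    have h2 := Finset.card_filter_add_card_filter_not (s := (Finset.univ : Finset (K × K)))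
      (fun v => v.1 * σ v.1 + (v.2 + σ v.2) = 0)
    rw [Finset.card_univ, Fintype.card_prod, hK] at h2
    rw [Fintype.card_subtype]
    have h3 : q ^ 4 = q ^ 2 * q ^ 2 := by ring
    have h4 : 2 * q ^ 3 ≤ q ^ 4 := by
      rw [pow_succ q 3, mul_comm]; exact Nat.mul_le_mul_left _ hq1
    simp only [ne_eq]
    omega
  · refine (Fintype.card_subtype_le _).trans ?_
    rw [Fintype.card_prod, hK]
    apply le_of_eq; ring
end

/-! ### Conclusion -/

section
open Classical
variable {P L : Type*} {r : ℕ}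

/-- Sets of lines without rich points: iterating the container step shows that there are few of
them of size `t`, and so a random set of lines contains none. -/
theorem exists_good_lines [Fintype P] [Fintype L] {I : P → L → Prop} {sz : Fin r → ℕ}
    {q k b m t i : ℕ} (hr : 0 < r) (hq0 : 0 < q) (hs : ∑ i, sz i = k + 1)
    (hP : Fintype.card P ≤ q ^ 3) (hLc : Fintype.card L ≤ q ^ 4)
    (hL : ∀ l, (Finset.univ.filter fun p => I p l).card = q + 1) (hI : Linear I)
    (hexp : 2 * (q : ℝ) ^ 4 * Real.exp (-(q / (32 * r))) ≤ 1) (hb0 : 0 < b)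
    (hb : (q : ℝ) ^ (2 * k) ≤ q * (b : ℝ) ^ k)
    (hi : (1 - shrink r k sz) ^ i * (q : ℝ) ^ 4 ≤ (32 * r ^ 2 * (k + 1) : ℕ) * q ^ 2)
    (hm : m ≤ Fintype.card L)
    (hcount : (((Fintype.card L + 1) ^ (b * k)) ^ i *
      ((32 * r ^ 2 * (k + 1)) * q ^ 2).choose t) * m ^ t < Fintype.card L ^ t) :
    ∃ (χ : P → L → Fin r) (W : Finset L), W.card = m ∧
      ∀ T : Finset L, T.card = t → T ⊆ W → ¬ RichFree I χ sz T := by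
  obtain ⟨χ, hχ⟩ := exists_colouring hr I hP hLc hq0 hexp
  refine ⟨χ, ?_⟩
  set Z : ℕ := 32 * r ^ 2 * (k + 1) * q ^ 2 with hZ
  have hstep : ∀ X : Finset L, (Z : ℝ) < X.card →
      Covered {T | T ⊆ X ∧ T ∈ {T | RichFree I χ sz T}} ((Fintype.card L + 1) ^ (b * k))
        ((1 - shrink r k sz) * X.card) := by
    intro X hX
    have hX' : Z ≤ X.card := by exact_mod_cast hX.le
    refine container_step hr hP hL hI hs hq0 hb0 hb (le_trans ?_ hX') (hχ X (le_trans ?_ hX'))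
    · have : r ≤ r ^ 2 := Nat.le_self_pow (by norm_num) r
      rw [hZ]
      gcongr
    · rw [hZ]
      calc 32 * r ^ 2 * q ^ 2 = 32 * r ^ 2 * 1 * q ^ 2 := by ring
        _ ≤ _ := by gcongr; omega
  have hcov := covered_iterate (Nat.one_le_pow _ _ (by omega)) (shrink_le_one hr k sz) hstep i
    Finset.univ (by
      refine le_trans ?_ (hi.trans (le_of_eq (by rw [hZ]; push_cast; ring)))
      have h0 : 0 ≤ 1 - shrink r k sz := by have := shrink_le_one hr k sz; linarith
      have : ((Finset.univ : Finset L).card : ℝ) ≤ (q:ℝ) ^ 4 := by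
        rw [Finset.card_univ]; exact_mod_cast hLc
      gcongr)
  set Bad : Finset (Finset L) := Finset.univ.filter fun T => T.card = t ∧ RichFree I χ sz T
  have hBad := hcov.card_le (t := t) Bad fun T hT =>
    ⟨⟨Finset.subset_univ _, (Finset.mem_filter.1 hT).2.2⟩, (Finset.mem_filter.1 hT).2.1⟩
  obtain ⟨W, hW, hW2⟩ := exists_avoiding Bad (fun T hT => (Finset.mem_filter.1 hT).2.1) hm
    (lt_of_le_of_lt (Nat.mul_le_mul_right _ hBad) hcount)
  exact ⟨W, hW, fun T hT hTW hTf =>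
    hW2 T (Finset.mem_filter.2 ⟨Finset.mem_univ _, hT, hTf⟩) hTW⟩
end

theorem stmt18 (r : ℕ) (hr : 2 ≤ r) (sz : Fin r → ℕ) (hsz : ∀ i, 0 < sz i) :
    ∃ q₀ : ℕ, ∀ q : ℕ, Nat.Prime q → q₀ ≤ q →
      ∃ (m : ℕ) (G : SimpleGraph (Fin m)),
        (1 / 2 : ℝ) * (q : ℝ) ^ ((4 : ℝ) - 1 / ((∑ i, sz i : ℕ) - 1 : ℝ)) ≤ (m : ℝ) ∧
        ¬ ContainsCopy (⊤ : SimpleGraph (Fin (r + 2))) G ∧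
        (fIndepNum (SimpleGraph.completeMultipartiteGraph fun i => Fin (sz i)) G : ℝ) <
          (q : ℝ) ^ ((2 : ℝ) - 1 / ((∑ i, sz i : ℕ) - 1 : ℝ)) * Real.logb 2 (q : ℝ) ^ 3 := by
  have hsum : r ≤ ∑ i, sz i := by
    calc r = ∑ i : Fin r, 1 := by simp
      _ ≤ _ := Finset.sum_le_sum fun i _ => hsz i
  obtain ⟨k, hk⟩ : ∃ k, ∑ i, sz i = k + 1 := ⟨∑ i, sz i - 1, by omega⟩
  have hk1 : 1 ≤ k := by omega
  have hr0 : 0 < r := by omega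
  have hkr : ((∑ i, sz i : ℕ) - 1 : ℝ) = k := by rw [hk]; push_cast; ring
  rw [hkr]
  have hC : 1 ≤ 32 * r ^ 2 * (k + 1) := Nat.one_le_iff_ne_zero.2 (by positivity)
  obtain ⟨q₀, hq₀⟩ := parameters r k (32 * r ^ 2 * (k + 1)) hr0 hk1 hC
    (shrink_pos hr0 k sz) (shrink_le_one hr0 k sz)
  refine ⟨q₀, fun q hq hqq => ?_⟩
  obtain ⟨hq2, hexp, b, m, t, i, hb0, hb, hm, ht, hi, hn⟩ := hq₀ q hqq
  obtain ⟨P, L, _, _, I, hP, hL1, hL2, hline, hI, hO⟩ := unital q hq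
  obtain ⟨hmL, hcount⟩ := hn _ hL1 hL2
  obtain ⟨χ, W, hW, hfree⟩ := exists_good_lines hr0 (by omega) hk hP hL2 hline hI hexp hb0 hb hi
    hmL hcount
  let e : Fin m ↪ L := (finCongr hW.symm).toEmbedding.trans
    (W.equivFin.symm.toEmbedding.trans (Function.Embedding.subtype _))
  have heW : ∀ x, e x ∈ W := fun x => (W.equivFin.symm (finCongr hW.symm x)).2
  refine ⟨m, (meetGraph I χ).comap e, hm, ?_, ?_⟩
  · rintro ⟨f, hf, hadj⟩
    exact not_containsCopy_top hr hI hO χ ⟨e ∘ f, e.injective.comp hf, fun a b h => hadj h⟩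
  · have h1 : fIndepNum (SimpleGraph.completeMultipartiteGraph fun i => Fin (sz i))
        ((meetGraph I χ).comap e) < t := by
      refine fIndepNum_lt hr0 hsz e fun S hS => hfree _ (by rwa [Finset.card_map]) ?_
      intro l hl
      obtain ⟨x, -, rfl⟩ := Finset.mem_map.1 hl
      exact heW x
    have h2 : (fIndepNum (SimpleGraph.completeMultipartiteGraph fun i => Fin (sz i))
        ((meetGraph I χ).comap e) : ℝ) + 1 ≤ t := by exact_mod_cast h1
    linarith
end

section
/- For every δ > 0 there exists a constant C > 0 such that for every sequence p = p(n) with n^{−1/3−δ} < p < n^{−1/3}(log n)^{8/3}, with high probability (probability tending to 1 as n → ∞), ex(G(n,p), C_4) ≤ C · n^{4/3} · (log n)^{4/3}. -/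
open MeasureTheory in
/-- The Bernoulli measure on `Bool` with success probability `p`. -/
noncomputable def bernoulliMeasure (p : ℝ) : Measure Bool :=
  ENNReal.ofReal p • Measure.dirac true + ENNReal.ofReal (1 - p) • Measure.dirac false

open MeasureTheory in
/-- The law of the Erdős–Rényi random graph `G(n,p)`, realized as the product Bernoulli
measure on indicator functions of (potential) edges. -/
noncomputable def gnp (n : ℕ) (p : ℝ) : Measure (Sym2 (Fin n) → Bool) :=
  Measure.pi fun _ => bernoulliMeasure p

/-- The graph on `Fin n` associated to a configuration `ω` of edge indicators. -/
def graphOf {n : ℕ} (ω : Sym2 (Fin n) → Bool) : SimpleGraph (Fin n) :=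
  SimpleGraph.fromEdgeSet {e | ω e = true}

/-- `ex(Γ, F)`: the maximum number of edges in an `F`-free subgraph of `Γ`. -/
noncomputable def relTuranNum {V α : Type*} (Γ : SimpleGraph V) (F : SimpleGraph α) : ℕ :=
  sSup {k | ∃ G' : SimpleGraph V, G' ≤ Γ ∧ ¬ ContainsCopy F G' ∧ k = Nat.card G'.edgeSet}

open Finset MeasureTheory

/-! ### Independent sets in locally dense relations -/

/-- `A` spans no pair related by `F`: an independent set of `F`, viewed as a graph. -/
def IndepIn {V : Type*} (F : V → V → Prop) (A : Finset V) : Prop := ∀ a ∈ A, ∀ b ∈ A, ¬ F a b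

/-- The partition function `∑ y ^ |A|` over the `F`-independent subsets `A` of `U`. -/
noncomputable def indepWeight {V : Type*} [DecidableEq V] (F : V → V → Prop) (y : ℝ)
    (U : Finset V) : ℝ :=
  open Classical in
  ∑ A ∈ U.powerset with IndepIn F A, y ^ #A

variable {V : Type*} [DecidableEq V]

lemma indepWeight_le_exp (F : V → V → Prop) {y : ℝ} (hy : 0 ≤ y) (U : Finset V) :
    indepWeight F y U ≤ Real.exp (y * #U) := by
  classical
  calc indepWeight F y U ≤ ∑ A ∈ U.powerset, y ^ #A :=
        sum_le_sum_of_subset_of_nonneg (filter_subset _ _) (fun _ _ _ => by positivity)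
    _ = (y + 1) ^ #U := by
        rw [← Finset.sum_pow_mul_eq_add_pow]; simp
    _ ≤ Real.exp y ^ #U := by gcongr; exact Real.add_one_le_exp y
    _ = _ := by rw [← Real.exp_nat_mul, mul_comm]

/-- Splitting by whether `v` belongs to the independent set; if it does, its neighbours `N` do
not. -/
lemma indepWeight_le_add (F : V → V → Prop) {y : ℝ} (hy : 0 ≤ y) (U N : Finset V) {v : V}
    (hv : v ∈ U) (hN : ∀ w ∈ N, F v w) :
    indepWeight F y U ≤ indepWeight F y (U.erase v) + y * indepWeight F y (U.erase v \ N) := by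
  classical
  unfold indepWeight
  conv_lhs => rw [← insert_erase hv]
  rw [sum_filter, sum_powerset_insert (notMem_erase v U), ← sum_filter (s := (U.erase v).powerset)]
  gcongr
  rw [mul_sum, ← sum_filter (s := (U.erase v).powerset) (p := fun A => IndepIn F (insert v A))]
  refine (sum_le_sum_of_subset_of_nonneg (t := {A ∈ (U.erase v \ N).powerset | IndepIn F A}) ?_
    (fun _ _ _ => by positivity)).trans (sum_le_sum ?_)
  · intro A hA
    simp only [mem_filter, mem_powerset] at hA ⊢
    refine ⟨fun a ha => mem_sdiff.2 ⟨hA.1 ha, fun haN => ?_⟩, fun a ha b hb =>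
      hA.2 a (mem_insert_of_mem ha) b (mem_insert_of_mem hb)⟩
    exact hA.2 v (mem_insert_self _ _) a (mem_insert_of_mem ha) (hN a haN)
  · intro A hA
    simp only [mem_filter, mem_powerset] at hA
    rw [card_insert_of_notMem (fun h => by have := hA.1 h; simp at this), pow_succ, mul_comm]

/-- The Kleitman–Winston bound, for partition functions. If every subset of `S` larger than `R` has
a vertex adjacent to a proportion at least `β` of it, then `U` with `|U| ≤ R exp(βj)` has
independent set weight at most `(1 + |S|) ^ j * exp(yR)`: each of the `j` rounds deletes vertices of
large degree until one of them is selected, which shrinks the set by a factor `1 - β ≤ exp(-β)`. -/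
lemma indepWeight_kw (F : V → V → Prop) (hF : ∀ v, ¬ F v v) {y R β : ℝ} (hy : 0 ≤ y) (hy1 : y ≤ 1)
    (S : Finset V)
    (h : ∀ U ⊆ S, R < #U → ∃ v ∈ U, ∃ N ⊆ U, (∀ w ∈ N, F v w) ∧ β * #U ≤ #N) (j : ℕ) :
    ∀ U ⊆ S, (#U : ℝ) ≤ R * Real.exp (β * j) →
      indepWeight F y U ≤ (1 + #S) ^ j * Real.exp (y * R) := by
  induction j with
  | zero =>
    intro U hU hR
    simp only [Nat.cast_zero, mul_zero, Real.exp_zero, mul_one, pow_zero, one_mul] at hR ⊢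
    exact (indepWeight_le_exp F hy U).trans (by gcongr)
  | succ j ih =>
    set X : ℝ := (1 + #S) ^ j * Real.exp (y * R) with hX
    have key : ∀ m : ℕ, ∀ U ⊆ S, #U = m → (#U : ℝ) ≤ R * Real.exp (β * (j + 1 : ℕ)) →
        indepWeight F y U ≤ (1 + m) * X := by
      intro m
      induction m with
      | zero =>
        intro U hU hm hR
        rw [card_eq_zero] at hm
        subst hm
        have h1 : 0 ≤ R := by
          by_contra hc
          have := mul_neg_of_neg_of_pos (not_le.1 hc) (Real.exp_pos (β * (j + 1 : ℕ)))
          simp at hR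
          push_cast at this
          linarith
        simpa using ih ∅ hU (by simp; positivity)
      | succ m ihm =>
        intro U hU hm hR
        rcases le_or_gt (#U : ℝ) R with hle | hlt
        · refine (indepWeight_le_exp F hy U).trans ?_
          have h1 : Real.exp (y * #U) ≤ Real.exp (y * R) := by gcongr
          have h2 : Real.exp (y * R) ≤ X :=
            le_mul_of_one_le_left (by positivity) (one_le_pow₀ (by simp))
          have h3 : X ≤ (1 + (m + 1 : ℕ)) * X :=
            le_mul_of_one_le_left (by positivity) (by push_cast; linarith [(Nat.cast_nonneg m : (0:ℝ) ≤ m)])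
          linarith
        · obtain ⟨v, hv, N, hNU, hN, hβ⟩ := h U hU hlt
          have hvN : v ∉ N := fun hvN => hF v (hN v hvN)
          have hc : #(U.erase v) = m := by rw [card_erase_of_mem hv, hm]; rfl
          have h1 := ihm (U.erase v) ((erase_subset _ _).trans hU) hc
            (le_trans (by gcongr; exact erase_subset _ _) hR)
          have hsub : U.erase v \ N ⊆ U \ N := sdiff_subset_sdiff (erase_subset _ _) le_rfl
          have hcard : (#(U \ N) : ℝ) = #U - #N := by
            rw [card_sdiff_of_subset hNU, Nat.cast_sub (card_le_card hNU)]
          have h2 := ih (U.erase v \ N) ((sdiff_subset.trans (erase_subset _ _)).trans hU) (by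
            calc (#(U.erase v \ N) : ℝ) ≤ #(U \ N) := by gcongr
              _ ≤ #U * (-β + 1) := by rw [hcard]; linarith
              _ ≤ #U * Real.exp (-β) := by gcongr; exact Real.add_one_le_exp _
              _ ≤ R * Real.exp (β * (j + 1 : ℕ)) * Real.exp (-β) := by gcongr
              _ = R * Real.exp (β * j) := by
                rw [mul_assoc, ← Real.exp_add]; congr 2; push_cast; ring)
          have h3 := indepWeight_le_add F hy U N hv hN
          have h4 : y * indepWeight F y (U.erase v \ N) ≤ 1 * X :=
            mul_le_mul hy1 h2 (by unfold indepWeight; positivity) zero_le_one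
          push_cast
          linarith
    intro U hU hR
    refine (key _ U hU rfl hR).trans ?_
    rw [pow_succ, mul_right_comm, mul_comm _ (1 + (#S : ℝ)), ← hX]
    gcongr

/-! ### Density of the square of a graph without 4-cycles -/

/-- The neighbourhood of `v` as a finset, with decidability supplied classically. -/
noncomputable def nbrs {V : Type*} [Fintype V] (G : SimpleGraph V) (v : V) : Finset V :=
  open Classical in {u | G.Adj v u}

@[simp] lemma mem_nbrs {V : Type*} [Fintype V] {G : SimpleGraph V} {u v : V} :
    u ∈ nbrs G v ↔ G.Adj v u := by
  simp [nbrs]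

/-- `G` has no 4-cycle: two distinct vertices `a`, `c` have at most one common neighbour. -/
def C4F {V : Type*} (G : SimpleGraph V) : Prop :=
  ∀ ⦃a b c d : V⦄, a ≠ c → G.Adj a b → G.Adj b c → G.Adj a d → G.Adj d c → b = d

/-- `u` and `w` are distinct and joined by a path of length two in `G`. -/
def sqAdj {V : Type*} (G : SimpleGraph V) (u w : V) : Prop := u ≠ w ∧ ∃ z, G.Adj u z ∧ G.Adj z w

open Classical in
/-- In a graph without 4-cycles, a large set `U` of vertices of degree at least `k` contains a vertex
joined by paths of length two to at least `k ^ 2 |U| / (2n)` vertices of `U`. Paths of length two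
with different middle vertices have different pairs of ends, so convexity bounds their number from
below. -/
lemma sq_dense [Fintype V] (G : SimpleGraph V) (hG : C4F G) {k : ℝ}
    (hk : 0 < k) (U : Finset V) (hU : U.Nonempty) (hdeg : ∀ u ∈ U, k ≤ #(nbrs G u))
    (hbig : 2 * (Fintype.card V : ℝ) ≤ k * #U) :
    ∃ v ∈ U, ∃ N ⊆ U, (∀ w ∈ N, sqAdj G v w) ∧ k ^ 2 / (2 * (Fintype.card V : ℝ)) * #U ≤ #N := by
  set n : ℝ := ((Fintype.card V : ℕ) : ℝ) with hn
  have hn0 : 0 < n := by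
    obtain ⟨v, -⟩ := hU
    have : Nonempty V := ⟨v⟩
    rw [hn]; exact_mod_cast Fintype.card_pos
  let D : V → Finset V := fun z => {u ∈ U | G.Adj u z}
  have hS : k * #U ≤ ∑ z, (#(D z) : ℝ) := by
    have e1 : ∑ z, #(D z) = ∑ u ∈ U, #(nbrs G u) := by
      have := sum_card_bipartiteAbove_eq_sum_card_bipartiteBelow (s := U) (t := univ) G.Adj
      simp only [bipartiteAbove, bipartiteBelow] at this
      rw [show ∑ z, #(D z) = _ from this.symm]
      refine sum_congr rfl fun u _ => ?_
      congr 1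
    have e2 : ∑ z, (#(D z) : ℝ) = ∑ u ∈ U, (#(nbrs G u) : ℝ) := by exact_mod_cast e1
    rw [e2, mul_comm, ← nsmul_eq_mul]
    exact card_nsmul_le_sum _ _ _ hdeg
  -- Ordered pairs of distinct vertices of `U` with common neighbour `z` are disjoint for distinct `z`.
  have hpairs : ∑ z, #(D z).offDiag ≤ ∑ u ∈ U, #{w ∈ U | sqAdj G u w} := by
    rw [← card_biUnion, ← card_sigma]
    · refine card_le_card_of_injOn (fun x => (⟨x.1, x.2⟩ : (_ : V) × V)) ?_ ?_
      · intro x hx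
        simp only [coe_biUnion, Set.mem_iUnion, mem_coe, mem_offDiag, D, mem_filter] at hx
        obtain ⟨z, -, ⟨h1, h2⟩, ⟨h3, h4⟩, h5⟩ := hx
        simp only [coe_sigma, Set.mem_sigma_iff, mem_coe, mem_filter]
        exact ⟨h1, h3, h5, z, h2, h4.symm⟩
      · rintro ⟨a, b⟩ - ⟨c, d⟩ - h
        simpa using h
    · intro z _ z' _ hne
      rw [Function.onFun, Finset.disjoint_left]
      rintro ⟨a, c⟩ h1 h2
      simp only [mem_offDiag, D, mem_filter] at h1 h2
      exact hne (hG h1.2.2 h1.1.2 h1.2.1.2.symm h2.1.2 h2.2.1.2.symm)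
  have hpairs' : (∑ z, (#(D z) : ℝ)) ^ 2 / n - ∑ z, (#(D z) : ℝ)
      ≤ ∑ u ∈ U, (#{w ∈ U | sqAdj G u w} : ℝ) := by
    have h1 : (∑ z, (#(D z) : ℝ)) ^ 2 ≤ n * ∑ z, (#(D z) : ℝ) ^ 2 := by
      simpa using sq_sum_le_card_mul_sum_sq (s := (univ : Finset V)) (f := fun z => (#(D z) : ℝ))
    have h2 : ∑ z, ((#(D z) : ℝ) ^ 2 - #(D z)) ≤ ∑ u ∈ U, (#{w ∈ U | sqAdj G u w} : ℝ) := by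
      refine le_trans (le_of_eq ?_) (Nat.cast_le.2 hpairs |>.trans_eq (by push_cast; rfl))
      push_cast
      refine sum_congr rfl fun z _ => ?_
      rw [offDiag_card, Nat.cast_sub (Nat.le_mul_self _)]
      push_cast; ring
    rw [sum_sub_distrib] at h2
    have h3 := (div_le_iff₀' hn0).2 h1
    linarith
  set T := ∑ z, (#(D z) : ℝ)
  by_contra hcon
  push Not at hcon
  have hlt : ∑ u ∈ U, (#{w ∈ U | sqAdj G u w} : ℝ) < ∑ u ∈ U, k ^ 2 / (2 * n) * #U :=
    sum_lt_sum_of_nonempty hU fun u hu =>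
      hcon u hu _ (filter_subset _ _) (fun w hw => (mem_filter.1 hw).2)
  rw [sum_const, nsmul_eq_mul] at hlt
  have h5 : (k * #U) ^ 2 / (2 * n) ≤ T ^ 2 / n - T := by
    rw [div_le_iff₀ (by positivity)]
    have : (T ^ 2 / n - T) * (2 * n) = 2 * T ^ 2 - 2 * n * T := by field_simp
    rw [this]
    have hT : 0 ≤ k * #U := by positivity
    nlinarith
  have h6 : (#U : ℝ) * (k ^ 2 / (2 * n) * #U) = (k * #U) ^ 2 / (2 * n) := by ring
  linarith

/-! ### Extending a graph by one vertex -/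

open Classical in
/-- The total weight of the possible neighbourhoods of size `d` of a new vertex, when `G` has no
4-cycle and minimum degree at least `d - 1` on `S`. Here `t` and `s` stand for `n ^ (1/3)` and
`(log n) ^ (1/3)`, and `q` for a constant multiple of the edge probability. Below
`d ≈ (n log n) ^ (1/3)` counting all `d`-sets suffices; above it the Kleitman–Winston bound is
applied to the square of `G`. -/
lemma local_bound {n : ℕ} (G : SimpleGraph (Fin n)) (hG : C4F G) (S : Finset (Fin n)) (d : ℕ)
    (hdeg : ∀ u ∈ S, (d : ℝ) - 1 ≤ #(nbrs G u)) {t s q : ℝ} (ht : 0 < t) (hs : 0 < s)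
    (hts : 2 ≤ t * s) (hn : (n : ℝ) = t ^ 3) (hlog : (n : ℝ) = Real.exp (s ^ 3))
    (hlog1 : 1 + (n : ℝ) ≤ Real.exp (2 * s ^ 3)) (hq : 0 < q) (hq1 : q ≤ 1)
    (hqt : q * t ≤ 3 * s ^ 8) :
    ∑ A ∈ S.powerset with IndepIn (sqAdj G) A ∧ #A = d, q ^ #A ≤ Real.exp (20 * (t * s ^ 4)) := by
  have hL : t * s ^ 4 = (t * s) * s ^ 3 := by ring
  have hs3 : 0 < s ^ 3 := by positivity
  have hL2 : 2 * s ^ 3 ≤ t * s ^ 4 := by rw [hL]; gcongr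
  have hSn : #S ≤ n := by simpa using card_le_univ S
  rcases lt_or_ge ((d : ℝ) - 1) (t * s) with hd | hd
  · have h1 : ∑ A ∈ S.powerset with IndepIn (sqAdj G) A ∧ #A = d, q ^ #A ≤
        ∑ A ∈ S.powersetCard d, (1 : ℝ) := by
      refine (sum_le_sum_of_subset_of_nonneg ?_ (fun _ _ _ => by positivity)).trans
        (sum_le_sum fun A _ => pow_le_one₀ hq.le hq1)
      intro A hA
      simp only [mem_filter, mem_powerset] at hA
      exact mem_powersetCard.2 ⟨hA.1, hA.2.2⟩
    refine h1.trans ?_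
    rw [sum_const, card_powersetCard, nsmul_eq_mul, mul_one]
    calc ((#S).choose d : ℝ) ≤ (#S : ℝ) ^ d := by exact_mod_cast Nat.choose_le_pow _ _
      _ ≤ (n : ℝ) ^ d := by gcongr
      _ = Real.exp (d * s ^ 3) := by rw [hlog, ← Real.exp_nat_mul]
      _ ≤ _ := by
        rw [Real.exp_le_exp]
        nlinarith [mul_pos ht (pow_pos hs 4)]
  · rcases ({A ∈ S.powerset | IndepIn (sqAdj G) A ∧ #A = d}).eq_empty_or_nonempty with he | ⟨A₀, hA₀⟩
    · rw [he, sum_empty]; positivity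
    simp only [mem_filter, mem_powerset] at hA₀
    have hdn : d ≤ n := hA₀.2.2 ▸ (card_le_card hA₀.1).trans hSn
    have hdn' : (d : ℝ) ≤ n := by exact_mod_cast hdn
    set k : ℝ := (d : ℝ) - 1 with hk
    have hk0 : 0 < k := by linarith
    have hd0 : 0 < (d : ℝ) := by linarith
    have hn0 : 0 < (n : ℝ) := by linarith
    set R : ℝ := 2 * n / k with hR
    have hR1 : 1 ≤ R := by rw [hR, one_le_div hk0]; linarith
    set β : ℝ := k ^ 2 / (2 * n) with hβ
    have hβ0 : 0 < β := by positivity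
    -- Using a weight `y` smaller than `q` keeps `y * R` of order `t * s ^ 4` for small `d` too,
    -- while the price `(q / y) ^ d` is at most `exp (t * s ^ 4)`.
    set y : ℝ := q * (d / (t * s ^ 4 + d)) with hy
    have hy0 : 0 < y := by positivity
    have hyq : y ≤ q := mul_le_of_le_one_right hq.le
      (by rw [div_le_one (by positivity)]; linarith [mul_pos ht (pow_pos hs 4)])
    set j : ℕ := ⌈s ^ 3 / β⌉₊ with hj
    have hj1 : s ^ 3 / β ≤ j := Nat.le_ceil _
    have hj2 : (j : ℝ) ≤ s ^ 3 / β + 1 := (Nat.ceil_lt_add_one (by positivity)).le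
    have hβ2 : s ^ 3 / β ≤ 2 * (t * s) := by
      rw [hβ, div_div_eq_mul_div, div_le_iff₀ (by positivity), hn]
      have : (t * s) ^ 2 ≤ k ^ 2 := by gcongr
      calc s ^ 3 * (2 * t ^ 3) = 2 * (t * s) * (t * s) ^ 2 := by ring
        _ ≤ _ := by gcongr
    have hkw := indepWeight_kw (sqAdj G) (fun v hv => hv.1 rfl) hy0.le (hyq.trans hq1) S
      (R := R) (β := β) (fun U hU hRU => by
        have hU0 : U.Nonempty := by
          rw [← card_pos]; exact_mod_cast (zero_lt_one.trans_le hR1).trans hRU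
        have := sq_dense G hG hk0 U hU0 (fun u hu => hdeg u (hU hu)) (by
          rw [hR, div_lt_iff₀ hk0] at hRU
          simp only [Fintype.card_fin]; linarith)
        simpa only [Fintype.card_fin] using this) j S le_rfl (by
        calc (#S : ℝ) ≤ n := by exact_mod_cast hSn
          _ = Real.exp (s ^ 3) := hlog
          _ ≤ Real.exp (β * j) := by
            gcongr; rwa [div_le_iff₀' hβ0] at hj1
          _ ≤ R * Real.exp (β * j) := le_mul_of_one_le_left (by positivity) hR1)
    have hpow : (1 + (#S : ℝ)) ^ j ≤ Real.exp (5 * (t * s ^ 4)) := by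
      calc (1 + (#S : ℝ)) ^ j ≤ (1 + n) ^ j := by gcongr
        _ ≤ Real.exp (2 * s ^ 3) ^ j := by gcongr
        _ = Real.exp (j * (2 * s ^ 3)) := by rw [← Real.exp_nat_mul]
        _ ≤ _ := by
          rw [Real.exp_le_exp]
          calc (j : ℝ) * (2 * s ^ 3) ≤ (2 * (t * s) + 1) * (2 * s ^ 3) := by
                gcongr; exact hj2.trans (by gcongr)
            _ ≤ _ := by nlinarith
    have hyR : y * R ≤ 12 * (t * s ^ 4) := by
      have h1 : y * R ≤ q * (d / (t * s ^ 4)) * (2 * n / (d / 2)) := by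
        rw [hy, hR]
        gcongr
        · linarith
        · linarith
      refine h1.trans (le_of_eq_of_le (b := 4 * (q * t) * (t / s ^ 4)) ?_ ?_)
      · rw [hn]; field_simp; ring
      · calc 4 * (q * t) * (t / s ^ 4) ≤ 4 * (3 * s ^ 8) * (t / s ^ 4) := by gcongr
          _ = _ := by field_simp; ring
    have hratio : (q / y) ^ d ≤ Real.exp (t * s ^ 4) := by
      have : q / y = t * s ^ 4 / d + 1 := by rw [hy]; field_simp
      rw [this]
      calc (t * s ^ 4 / d + 1) ^ d ≤ Real.exp (t * s ^ 4 / d) ^ d := by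
            gcongr; exact Real.add_one_le_exp _
        _ = _ := by rw [← Real.exp_nat_mul]; congr 1; field_simp
    calc ∑ A ∈ S.powerset with IndepIn (sqAdj G) A ∧ #A = d, q ^ #A
        = (q / y) ^ d * ∑ A ∈ S.powerset with IndepIn (sqAdj G) A ∧ #A = d, y ^ #A := by
          rw [mul_sum]
          refine sum_congr rfl fun A hA => ?_
          rw [(mem_filter.1 hA).2.2, ← mul_pow, div_mul_cancel₀ _ hy0.ne']
      _ ≤ (q / y) ^ d * indepWeight (sqAdj G) y S := by
          gcongr
          exact sum_le_sum_of_subset_of_nonneg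
            (fun A hA => by simp only [mem_filter] at hA ⊢; exact ⟨hA.1, hA.2.1⟩)
            (fun _ _ _ => by positivity)
      _ ≤ Real.exp (t * s ^ 4) * (Real.exp (5 * (t * s ^ 4)) * Real.exp (12 * (t * s ^ 4))) := by
          have hW := hkw.trans (mul_le_mul hpow (Real.exp_le_exp.2 hyR) (by positivity) (by positivity))
          exact mul_le_mul hratio hW (by unfold indepWeight; positivity) (by positivity)
      _ ≤ _ := by
          rw [← Real.exp_add, ← Real.exp_add]
          gcongr
          linarith [mul_pos ht (pow_pos hs 4)]

/-! ### The partition function of graphs without 4-cycles -/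

/-- The number of edges. -/
noncomputable def ecount {V : Type*} (G : SimpleGraph V) : ℕ := Nat.card G.edgeSet

lemma ecount_delete {V : Type*} [Fintype V] (G : SimpleGraph V) (v : V) :
    ecount G = ecount (G.deleteIncidenceSet v) + #(nbrs G v) := by
  classical
  have h := G.card_edgeFinset_deleteIncidenceSet v
  have h2 : #(nbrs G v) = G.degree v := by
    rw [← G.card_neighborFinset_eq_degree]; congr 1; ext; simp
  have h3 : G.degree v ≤ #G.edgeFinset := by
    rw [← G.card_incidenceFinset_eq_degree]
    exact card_le_card (G.incidenceFinset_subset v)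
  rw [ecount, ecount, Nat.card_eq_fintype_card, Nat.card_eq_fintype_card,
    ← SimpleGraph.edgeFinset_card, ← SimpleGraph.edgeFinset_card, h2]
  convert (Nat.sub_add_cancel h3).symm using 2

/-- The graphs on `Fin n` without 4-cycles all of whose edges lie inside `S`. -/
noncomputable def c4Graphs {n : ℕ} (S : Finset (Fin n)) : Finset (SimpleGraph (Fin n)) :=
  open Classical in {G | C4F G ∧ G.support ⊆ S}

lemma mem_c4Graphs {n : ℕ} {S : Finset (Fin n)} {G : SimpleGraph (Fin n)} :
    G ∈ c4Graphs S ↔ C4F G ∧ G.support ⊆ S := by simp [c4Graphs]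

/-- The partition function `∑ q ^ e(G)` over the graphs `G` without 4-cycles inside `S`. -/
noncomputable def c4Weight {n : ℕ} (q : ℝ) (S : Finset (Fin n)) : ℝ :=
  ∑ G ∈ c4Graphs S, q ^ ecount G

open Classical in
/-- A graph in which `v` has minimum degree among `S` is determined by the graph left after deleting
the edges at `v`, together with the neighbourhood of `v`. That neighbourhood is independent in the
square of the remaining graph, where degrees have dropped by at most one. -/
lemma c4Weight_step {n : ℕ} (S : Finset (Fin n)) (v : Fin n) {q B : ℝ} (hq : 0 < q) (hB : 0 ≤ B)
    (hloc : ∀ (G : SimpleGraph (Fin n)) (d : ℕ), C4F G →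
      (∀ u ∈ S.erase v, (d : ℝ) - 1 ≤ #(nbrs G u)) →
      ∑ A ∈ (S.erase v).powerset with IndepIn (sqAdj G) A ∧ #A = d, q ^ #A ≤ B) :
    ∑ G ∈ c4Graphs S with ∀ u ∈ S, #(nbrs G v) ≤ #(nbrs G u), q ^ ecount G ≤
      (n + 1) * B * c4Weight q (S.erase v) := by
  set T := {G ∈ c4Graphs S | ∀ u ∈ S, #(nbrs G v) ≤ #(nbrs G u)} with hT
  have hmaps : ∀ G ∈ T, G.deleteIncidenceSet v ∈ c4Graphs (S.erase v) := by
    intro G hG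
    simp only [hT, mem_filter, mem_c4Graphs] at hG
    rw [mem_c4Graphs]
    have hle := G.deleteIncidenceSet_le v
    refine ⟨fun a b c d hac h1 h2 h3 h4 => hG.1.1 hac (hle h1) (hle h2) (hle h3) (hle h4), ?_⟩
    refine (G.support_deleteIncidenceSet_subset v).trans ?_
    rw [coe_erase]
    exact Set.sdiff_subset_sdiff_left hG.1.2
  rw [← sum_fiberwise_of_maps_to hmaps, c4Weight, mul_sum]
  refine sum_le_sum fun G' hG' => ?_
  have hinj : Set.InjOn (fun G : SimpleGraph (Fin n) => nbrs G v)
      ({G ∈ T | G.deleteIncidenceSet v = G'} : Finset _) := by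
    intro G₁ h₁ G₂ h₂ h
    simp only [coe_filter, Set.mem_ofPred_eq] at h₁ h₂
    have hv : ∀ u, G₁.Adj v u ↔ G₂.Adj v u := fun u => by
      rw [← mem_nbrs, ← mem_nbrs]; exact Finset.ext_iff.1 h u
    ext a b
    by_cases ha : a = v
    · rw [ha, hv]
    by_cases hb : b = v
    · rw [hb, G₁.adj_comm, G₂.adj_comm, hv]
    have e1 : G₁.Adj a b ↔ G'.Adj a b := by
      rw [← h₁.2, SimpleGraph.deleteIncidenceSet_adj]; tauto
    have e2 : G₂.Adj a b ↔ G'.Adj a b := by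
      rw [← h₂.2, SimpleGraph.deleteIncidenceSet_adj]; tauto
    rw [e1, e2]
  have hrw : ∑ G ∈ T with G.deleteIncidenceSet v = G', q ^ ecount G =
      q ^ ecount G' * ∑ A ∈ image (fun G => nbrs G v) {G ∈ T | G.deleteIncidenceSet v = G'},
        q ^ #A := by
    rw [sum_image hinj, mul_sum]
    refine sum_congr rfl fun G hG => ?_
    rw [ecount_delete G v, (mem_filter.1 hG).2, pow_add]
  rw [hrw, mul_comm]
  gcongr
  set I := image (fun G => nbrs G v) {G ∈ T | G.deleteIncidenceSet v = G'} with hI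
  have hr : ∀ A ∈ I, #A ∈ range (n + 1) := fun A _ => by
    rw [mem_range, Nat.lt_succ_iff]; simpa using card_le_univ A
  rw [← sum_fiberwise_of_maps_to hr]
  refine (sum_le_card_nsmul _ _ B fun d _ => ?_).trans_eq (by simp)
  rcases ({A ∈ I | #A = d}).eq_empty_or_nonempty with he | ⟨A₀, hA₀⟩
  · rw [he, sum_empty]; exact hB
  have hdeg : ∀ u ∈ S.erase v, (d : ℝ) - 1 ≤ #(nbrs G' u) := by
    intro u hu
    rw [mem_filter, hI, mem_image] at hA₀
    obtain ⟨⟨G, hG, rfl⟩, hd⟩ := hA₀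
    rw [mem_filter, hT, mem_filter] at hG
    have h1 : d ≤ #(nbrs G u) := hd ▸ hG.1.2 u (mem_of_mem_erase hu)
    have h2 : nbrs G u ⊆ insert v (nbrs G' u) := by
      intro w hw
      rw [mem_insert, mem_nbrs, ← hG.2, SimpleGraph.deleteIncidenceSet_adj]
      rw [mem_nbrs] at hw
      have := ne_of_mem_erase hu
      tauto
    have h3 := h1.trans ((card_le_card h2).trans (card_insert_le _ _))
    rw [sub_le_iff_le_add]; exact_mod_cast h3
  refine le_trans (sum_le_sum_of_subset_of_nonneg ?_ (fun _ _ _ => by positivity))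
    (hloc G' d (mem_c4Graphs.1 hG').1 hdeg)
  intro A hA
  rw [mem_filter, hI, mem_image] at hA
  obtain ⟨⟨G, hG, rfl⟩, hd⟩ := hA
  rw [mem_filter, hT, mem_filter, mem_c4Graphs] at hG
  rw [mem_filter, mem_powerset]
  refine ⟨fun w hw => ?_, ?_, hd⟩
  · rw [mem_nbrs] at hw
    exact mem_erase.2 ⟨hw.ne', hG.1.1.2 ⟨v, hw.symm⟩⟩
  · rintro a ha b hb ⟨hab, z, haz, hzb⟩
    rw [mem_nbrs] at ha hb
    rw [← hG.2, SimpleGraph.deleteIncidenceSet_adj] at haz hzb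
    exact haz.2.2 (hG.1.1.1 hab haz.1 hzb.1 ha.symm hb)

lemma c4Weight_le {n : ℕ} {t s q : ℝ} (ht : 0 < t) (hs : 0 < s)
    (hts : 2 ≤ t * s) (hn : (n : ℝ) = t ^ 3) (hlog : (n : ℝ) = Real.exp (s ^ 3))
    (hlog1 : 1 + (n : ℝ) ≤ Real.exp (2 * s ^ 3)) (hq : 0 < q) (hq1 : q ≤ 1)
    (hqt : q * t ≤ 3 * s ^ 8) (m : ℕ) :
    ∀ S : Finset (Fin n), #S = m →
      c4Weight q S ≤ (n * ((n + 1) * Real.exp (20 * (t * s ^ 4)))) ^ m := by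
  classical
  induction m with
  | zero =>
    intro S hS
    rw [card_eq_zero] at hS
    subst hS
    rw [c4Weight, pow_zero]
    have hsub : c4Graphs (∅ : Finset (Fin n)) ⊆ {⊥} := by
      intro G hG
      rw [mem_c4Graphs, coe_empty, Set.subset_empty_iff] at hG
      rw [mem_singleton]
      exact (SimpleGraph.support_eq_bot_iff G).1 hG.2
    refine (sum_le_sum_of_subset_of_nonneg hsub (fun _ _ _ => by positivity)).trans ?_
    simp [ecount]
  | succ m ih =>
    intro S hS
    have hne : S.Nonempty := card_pos.1 (by omega)
    choose f hfS hf using fun G : SimpleGraph (Fin n) => exists_min_image S (fun v => #(nbrs G v)) hne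
    rw [c4Weight, ← sum_fiberwise_of_maps_to (g := f) (t := S) (fun G _ => hfS G)]
    set B := Real.exp (20 * (t * s ^ 4))
    have hstep : ∀ v ∈ S, ∑ G ∈ c4Graphs S with f G = v, q ^ ecount G ≤
        (n + 1) * B * (n * ((n + 1) * B)) ^ m := by
      intro v hv
      refine le_trans (sum_le_sum_of_subset_of_nonneg ?_ (fun _ _ _ => by positivity))
        ((c4Weight_step S v hq (B := B) (by positivity) fun G d hG hd =>
          local_bound G hG _ d hd ht hs hts hn hlog hlog1 hq hq1 hqt).trans ?_)
      · intro G hG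
        rw [mem_filter] at hG ⊢
        exact ⟨hG.1, hG.2 ▸ hf G⟩
      · gcongr
        exact ih _ (by rw [card_erase_of_mem hv, hS]; rfl)
    refine (sum_le_card_nsmul _ _ _ hstep).trans ?_
    rw [nsmul_eq_mul, pow_succ' _ m, mul_assoc (n : ℝ)]
    have : (#S : ℝ) ≤ n := by exact_mod_cast (by simpa using card_le_univ S : #S ≤ n)
    gcongr

/-! ### The first moment bound -/

lemma c4F_of_not_containsCopy {V : Type*} {G : SimpleGraph V}
    (h : ¬ ContainsCopy (SimpleGraph.cycleGraph 4) G) : C4F G := by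
  intro a b c d hac hab hbc had hdc
  by_contra hbd
  refine h ⟨![a, b, c, d], ?_, ?_⟩
  · intro i j hij
    have := hab.ne
    have := hbc.ne
    have := had.ne
    have := hdc.ne
    fin_cases i <;> fin_cases j <;> simp_all
  · intro i j hij
    have := hab.symm
    have := hbc.symm
    have := had.symm
    have := hdc.symm
    fin_cases i <;> fin_cases j <;>
      first
      | assumption
      | (exfalso; revert hij; decide)

lemma isProb_bernoulli {p : ℝ} (hp0 : 0 ≤ p) (hp1 : p ≤ 1) :
    IsProbabilityMeasure (bernoulliMeasure p) := by
  constructor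
  simp only [bernoulliMeasure, Measure.coe_add, Measure.coe_smul, Pi.add_apply, Pi.smul_apply,
    measure_univ, smul_eq_mul, mul_one]
  rw [← ENNReal.ofReal_add hp0 (by linarith)]
  simp

lemma gnp_le {n : ℕ} {p : ℝ} (hp0 : 0 ≤ p) (hp1 : p ≤ 1) (G : SimpleGraph (Fin n)) :
    gnp n p {ω | G ≤ graphOf ω} ≤ ENNReal.ofReal p ^ ecount G := by
  classical
  have := isProb_bernoulli hp0 hp1
  have hsub : {ω : Sym2 (Fin n) → Bool | G ≤ graphOf ω} ⊆
      Set.univ.pi fun e => if e ∈ G.edgeSet then {true} else Set.univ := by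
    intro ω hω e _
    have hω' : G ≤ graphOf ω := hω
    rw [← SimpleGraph.edgeSet_subset_edgeSet] at hω'
    dsimp only
    split_ifs with he
    · have := hω' he
      rw [graphOf, SimpleGraph.edgeSet_fromEdgeSet] at this
      exact this.1
    · trivial
  refine (measure_mono hsub).trans ?_
  rw [gnp, Measure.pi_pi]
  have : ∀ e : Sym2 (Fin n), bernoulliMeasure p (if e ∈ G.edgeSet then {true} else Set.univ) =
      if e ∈ G.edgeSet then ENNReal.ofReal p else 1 := by
    intro e
    split_ifs
    · simp [bernoulliMeasure]
    · exact measure_univ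
  simp_rw [this]
  rw [prod_ite, prod_const, prod_const_one, mul_one, ecount, Nat.card_eq_fintype_card,
    ← SimpleGraph.edgeFinset_card]
  apply le_of_eq
  congr 2
  ext; simp

/-- Union bound over all graphs without 4-cycles and with more than `x` edges, using
`p ^ e ≤ exp(-x) * (exp(1) * p) ^ e` whenever `e ≥ x`. -/
lemma gnp_bad {n : ℕ} {p : ℝ} (hp0 : 0 ≤ p) (hp1 : p ≤ 1) {x : ℝ} (hx : 0 ≤ x) :
    gnp n p {ω | ¬ (relTuranNum (graphOf ω) (SimpleGraph.cycleGraph 4) : ℝ) ≤ x} ≤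
      ENNReal.ofReal (Real.exp (-x) * c4Weight (Real.exp 1 * p) (univ : Finset (Fin n))) := by
  classical
  have hsub : {ω : Sym2 (Fin n) → Bool |
      ¬ (relTuranNum (graphOf ω) (SimpleGraph.cycleGraph 4) : ℝ) ≤ x} ⊆
      ⋃ G ∈ {G ∈ c4Graphs (univ : Finset (Fin n)) | x < ecount G}, {ω | G ≤ graphOf ω} := by
    intro ω hω
    by_contra hcon
    refine hω ((Nat.cast_le.2 ?_).trans (Nat.floor_le hx))
    refine csSup_le' ?_
    rintro k ⟨G, hG, hC, rfl⟩
    refine Nat.le_floor ?_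
    by_contra hlt
    refine hcon ?_
    simp only [Set.mem_iUnion]
    exact ⟨G, mem_filter.2 ⟨mem_c4Graphs.2 ⟨c4F_of_not_containsCopy hC, by simp⟩,
      not_le.1 hlt⟩, hG⟩
  refine (measure_mono hsub).trans ((measure_biUnion_finset_le _ _).trans ?_)
  refine (sum_le_sum fun G _ => gnp_le hp0 hp1 G).trans ?_
  simp_rw [← ENNReal.ofReal_pow hp0]
  rw [← ENNReal.ofReal_sum_of_nonneg (fun _ _ => by positivity)]
  apply ENNReal.ofReal_le_ofReal
  rw [c4Weight, mul_sum]
  refine (sum_le_sum (fun G hG => ?_)).trans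
    (sum_le_sum_of_subset_of_nonneg (filter_subset _ _) (fun _ _ _ => by positivity))
  rw [mul_pow, ← mul_assoc, ← Real.exp_nat_mul, ← Real.exp_add]
  refine le_mul_of_one_le_left (by positivity) (Real.one_le_exp ?_)
  have := (mem_filter.1 hG).2
  linarith

/-- The quantitative form of the theorem, with `t = n ^ (1/3)` and `s = (log n) ^ (1/3)`. -/
lemma gnp_bad_le {n : ℕ} {p : ℝ} (hp0 : 0 < p) (hp1 : p ≤ 1) {t s : ℝ} (ht : 0 < t) (hs : 1 ≤ s)
    (hts : 2 ≤ t) (hn : (n : ℝ) = t ^ 3) (hlog : (n : ℝ) = Real.exp (s ^ 3))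
    (hst : 3 * s ^ 8 ≤ t) (hpt : p * t ≤ s ^ 8) :
    gnp n p {ω | ¬ (relTuranNum (graphOf ω) (SimpleGraph.cycleGraph 4) : ℝ) ≤ 25 * (t * s) ^ 4} ≤
      ENNReal.ofReal (Real.exp (-(n : ℝ))) := by
  have hs0 : 0 < s := by linarith
  refine (gnp_bad hp0.le hp1 (by positivity)).trans (ENNReal.ofReal_le_ofReal ?_)
  have hn8 : (8 : ℝ) ≤ n := by
    rw [hn]
    calc (8 : ℝ) = 2 ^ 3 := by norm_num
      _ ≤ _ := by gcongr
  have hlog1 : 1 + (n : ℝ) ≤ Real.exp (2 * s ^ 3) := by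
    rw [two_mul, Real.exp_add, ← hlog]; nlinarith
  have hqt : Real.exp 1 * p * t ≤ 3 * s ^ 8 := by
    rw [mul_assoc]
    have := Real.exp_one_lt_d9
    gcongr
    linarith
  have hq1 : Real.exp 1 * p ≤ 1 := by
    have : Real.exp 1 * p * t ≤ 1 * t := by linarith
    exact le_of_mul_le_mul_right this ht
  have hts' : 2 ≤ t * s := by nlinarith
  have hW := c4Weight_le ht hs0 hts' hn hlog hlog1 (q := Real.exp 1 * p) (by positivity) hq1
    hqt n univ (by simp)
  have hL : 2 * s ^ 3 ≤ t * s ^ 4 := by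
    calc 2 * s ^ 3 ≤ (t * s) * s ^ 3 := by gcongr
      _ = _ := by ring
  have hL1 : 1 ≤ t * s ^ 4 := by
    have : 1 ≤ s ^ 3 := one_le_pow₀ hs
    linarith
  calc Real.exp (-(25 * (t * s) ^ 4)) * c4Weight (Real.exp 1 * p) univ
      ≤ Real.exp (-(25 * (t * s) ^ 4)) *
        (Real.exp (s ^ 3) * (Real.exp (2 * s ^ 3) * Real.exp (20 * (t * s ^ 4)))) ^ n := by
        refine mul_le_mul_of_nonneg_left (hW.trans ?_) (by positivity)
        rw [← hlog, add_comm (n : ℝ) 1]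
        gcongr
    _ = Real.exp (-(25 * (t * s) ^ 4) + n * (s ^ 3 + (2 * s ^ 3 + 20 * (t * s ^ 4)))) := by
        rw [← Real.exp_add, ← Real.exp_add, ← Real.exp_nat_mul, ← Real.exp_add]
    _ ≤ _ := by
        have h1 : (t * s) ^ 4 = n * (t * s ^ 4) := by rw [hn]; ring
        rw [h1, Real.exp_le_exp]
        have h2 : (n : ℝ) * (s ^ 3 + (2 * s ^ 3 + 20 * (t * s ^ 4))) ≤ n * (22 * (t * s ^ 4)) := by
          gcongr; linarith
        have h3 : (n : ℝ) * 1 ≤ n * (t * s ^ 4) := by gcongr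
        linarith

theorem stmt19 (δ : ℝ) (hδ : 0 < δ) :
    ∃ C : ℝ, 0 < C ∧ ∀ p : ℕ → ℝ,
      (∀ᶠ n : ℕ in Filter.atTop,
        (n : ℝ) ^ (-(1 : ℝ) / 3 - δ) < p n ∧
          p n < (n : ℝ) ^ (-(1 : ℝ) / 3) * Real.log n ^ ((8 : ℝ) / 3) ∧ 0 ≤ p n ∧ p n ≤ 1) →
      Filter.Tendsto
        (fun n : ℕ => gnp n (p n)
          {ω | (relTuranNum (graphOf ω) (SimpleGraph.cycleGraph 4) : ℝ) ≤
            C * (n : ℝ) ^ ((4 : ℝ) / 3) * Real.log n ^ ((4 : ℝ) / 3)})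
        Filter.atTop (nhds 1) := by
  refine ⟨25, by norm_num, fun p hp => ?_⟩
  have hlim : Filter.Tendsto (fun n : ℕ => 1 - ENNReal.ofReal (Real.exp (-(n : ℝ))))
      Filter.atTop (nhds 1) := by
    have h1 : Filter.Tendsto (fun n : ℕ => ENNReal.ofReal (Real.exp (-(n : ℝ))))
        Filter.atTop (nhds 0) := by
      rw [← ENNReal.ofReal_zero]
      exact ENNReal.tendsto_ofReal
        (Real.tendsto_exp_neg_atTop_nhds_zero.comp tendsto_natCast_atTop_atTop)
    simpa using ENNReal.Tendsto.sub (tendsto_const_nhds (x := (1 : ENNReal))) h1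
      (Or.inl ENNReal.one_ne_top)
  have hpoly : ∀ᶠ n : ℕ in Filter.atTop,
      3 * Real.log n ^ ((8 : ℝ) / 3) ≤ (n : ℝ) ^ ((1 : ℝ) / 3) := by
    have h1 := (isLittleO_log_rpow_rpow_atTop ((8 : ℝ) / 3) (s := (1 : ℝ) / 3) (by norm_num)).def
      (c := 1 / 3) (by norm_num)
    filter_upwards [tendsto_natCast_atTop_atTop.eventually h1, Filter.eventually_ge_atTop 1]
      with n hn hn1
    have hlog0 : 0 ≤ Real.log n := Real.log_nonneg (by exact_mod_cast hn1)
    rw [Real.norm_of_nonneg (by positivity), Real.norm_of_nonneg (by positivity)] at hn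
    linarith
  refine tendsto_of_tendsto_of_tendsto_of_le_of_le' hlim tendsto_const_nhds ?_ ?_
  · filter_upwards [hp, hpoly, Filter.eventually_ge_atTop 8] with n ⟨h1, h2, h3, h4⟩ h5 h8
    have h8' : (8 : ℝ) ≤ n := by exact_mod_cast h8
    have hn0 : (0 : ℝ) < n := by linarith
    have hlog1 : 1 ≤ Real.log n := by
      rw [Real.le_log_iff_exp_le hn0]
      have := Real.exp_one_lt_d9
      linarith
    have hlog0 : 0 ≤ Real.log n := by linarith
    have hp0 : 0 < p n := lt_trans (by positivity) h1
    set t := (n : ℝ) ^ ((1 : ℝ) / 3) with ht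
    set s := Real.log n ^ ((1 : ℝ) / 3) with hs
    have ht0 : 0 < t := by positivity
    have et : ∀ k : ℕ, t ^ k = (n : ℝ) ^ ((k : ℝ) / 3) := fun k => by
      rw [ht, ← Real.rpow_natCast, ← Real.rpow_mul hn0.le]; congr 1; ring
    have es : ∀ k : ℕ, s ^ k = Real.log n ^ ((k : ℝ) / 3) := fun k => by
      rw [hs, ← Real.rpow_natCast, ← Real.rpow_mul hlog0]; congr 1; ring
    have et3 : t ^ 3 = n := by rw [et]; norm_num
    have es3 : s ^ 3 = Real.log n := by rw [es]; norm_num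
    have es8 : s ^ 8 = Real.log n ^ ((8 : ℝ) / 3) := by rw [es]; norm_num
    have hb := gnp_bad_le hp0 h4 (t := t) (s := s) ht0 (Real.one_le_rpow hlog1 (by norm_num))
      (by
        by_contra hlt
        have : t ^ 3 < 2 ^ 3 := by gcongr; exact not_le.1 hlt
        rw [et3] at this
        linarith) et3.symm (by rw [es3, Real.exp_log hn0]) (by rw [es8]; exact h5) (by
        rw [es8]
        have : (n : ℝ) ^ (-(1 : ℝ) / 3) * t = 1 := by
          rw [ht, ← Real.rpow_add hn0]; norm_num
        calc p n * t ≤ (n : ℝ) ^ (-(1 : ℝ) / 3) * Real.log n ^ ((8 : ℝ) / 3) * t := by gcongr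
          _ = Real.log n ^ ((8 : ℝ) / 3) * ((n : ℝ) ^ (-(1 : ℝ) / 3) * t) := by ring
          _ = _ := by rw [this, mul_one])
    have hx : 25 * (t * s) ^ 4 = 25 * (n : ℝ) ^ ((4 : ℝ) / 3) * Real.log n ^ ((4 : ℝ) / 3) := by
      rw [mul_pow, et, es, mul_assoc]; norm_num
    rw [hx] at hb
    have := isProb_bernoulli h3 h4
    have hone : gnp n (p n) Set.univ = 1 := by rw [gnp]; exact measure_univ
    rw [tsub_le_iff_right, ← hone]
    refine (measure_mono ?_).trans ((measure_union_le _ _).trans (add_le_add le_rfl hb))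
    intro ω _
    exact em _
  · filter_upwards [hp] with n ⟨h1, h2, h3, h4⟩
    have := isProb_bernoulli h3 h4
    rw [gnp]
    exact prob_le_one
end
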